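/- Let A be a σ-unital simple C*-algebra with strict comparison which is not purely infinite. Suppose H_a and H_b are countably generated Hilbert A-modules (with a, b ∈ (A⊗K)_+) such that ω(H_a) = 0 and d_τ(H_a) < d_τ(H_b) for all τ ∈ QT̃(A)\{0}. Then H_a is unitarily equivalent to a Hilbert A-submodule of H_b. -/

import Mathlib

open scoped ENNReal
open Filter Topology

noncomputable section

namespace Paper

/-! ### Generic definitions in a (non-unital) C*-algebra -/

variable (R : Type*) [NonUnitalCStarAlgebra R] [PartialOrder R] [StarOrderedRing R]

variable {R} in
/-- The hereditary C*-subalgebra generated by `b`, i.e. `closure (b R b)`. -/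
def her (b : R) : Set R := closure {x : R | ∃ y : R, x = b * y * b}

/-- `I` is a (not necessarily closed) two-sided ideal of the subalgebra `B`. -/
def IsIdealIn (B I : Set R) : Prop :=
  I ⊆ B ∧ (0 : R) ∈ I ∧ (∀ x ∈ I, ∀ y ∈ I, x + y ∈ I) ∧ (∀ x ∈ I, -x ∈ I) ∧
    (∀ x ∈ I, ∀ b ∈ B, x * b ∈ I ∧ b * x ∈ I)

variable {R} in
/-- The Pedersen ideal of the subalgebra `B`: the minimal dense two-sided ideal of `B`,
equivalently the intersection of all dense two-sided ideals of `B`. -/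
def pedersenIn (B : Set R) : Set R :=
  ⋂ I ∈ {I : Set R | IsIdealIn R B I ∧ B ⊆ closure I}, I

/-- The Pedersen ideal of `R`. -/
def pedersen : Set R := pedersenIn (Set.univ : Set R)

variable {R} in
/-- Cuntz subequivalence `a ≲ b`. -/
def CuntzLE (a b : R) : Prop :=
  ∃ x : ℕ → R, Tendsto (fun n => ‖a - star (x n) * b * x n‖) atTop (𝓝 0)

variable {R} in
/-- Cuntz subequivalence relative to a subset `B` (the `xₙ` are taken in `B`). -/
def CuntzLEIn (B : Set R) (a b : R) : Prop :=
  ∃ x : ℕ → R, (∀ n, x n ∈ B) ∧ Tendsto (fun n => ‖a - star (x n) * b * x n‖) atTop (𝓝 0)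

variable {R} in
/-- Cuntz equivalence `a ∼ b`. -/
def CuntzEq (a b : R) : Prop := CuntzLE a b ∧ CuntzLE b a

/-- The cut-off function `f_ε`: `0` on `[0, ε/2]`, `1` on `[ε, ∞)`, linear in between. -/
def cutoff (ε : ℝ) : ℝ → ℝ := fun t => min 1 (max 0 (2 * t / ε - 1))

variable {R} in
/-- `f_ε(a)`, via the (non-unital) continuous functional calculus. -/
def fEps (ε : ℝ) (a : R) : R := cfcₙ (cutoff ε) a

/-- A densely defined 2-quasitrace on `R` (recorded by its values on positive elements;
the value on non-positive elements is normalised to `0`). -/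
structure QuasiTrace : Type _ where
  toFun : R → ℝ≥0∞
  zero_of_not_nonneg : ∀ a : R, ¬ (0 ≤ a) → toFun a = 0
  map_zero : toFun 0 = 0
  map_smul : ∀ (r : ℝ) (a : R), 0 < r → 0 ≤ a → toFun (r • a) = ENNReal.ofReal r * toFun a
  map_add_of_commute : ∀ a b : R, 0 ≤ a → 0 ≤ b → a * b = b * a →
    toFun (a + b) = toFun a + toFun b
  map_star_mul_self : ∀ x : R, toFun (star x * x) = toFun (x * star x)
  lowerSemicontinuousOn : LowerSemicontinuousOn toFun {a : R | 0 ≤ a}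
  finite_on_pedersen : ∀ a ∈ pedersen R, 0 ≤ a → toFun a < ∞
  exists_matrix_extension : ∃ σ : Matrix (Fin 2) (Fin 2) R → ℝ≥0∞,
    (∀ a : R, σ (fun i j => if i = 0 ∧ j = 0 then a else 0) = toFun a) ∧
    σ 0 = 0 ∧
    (∀ (r : ℝ) (x : Matrix (Fin 2) (Fin 2) R), 0 < r → (∃ y, x = star y * y) →
      σ (r • x) = ENNReal.ofReal r * σ x) ∧
    (∀ x y : Matrix (Fin 2) (Fin 2) R, (∃ z, x = star z * z) → (∃ z, y = star z * z) →
      x * y = y * x → σ (x + y) = σ x + σ y) ∧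
    (∀ x : Matrix (Fin 2) (Fin 2) R, σ (star x * x) = σ (x * star x))

/-- The topology of pointwise convergence on the Pedersen ideal. -/
instance : TopologicalSpace (QuasiTrace R) :=
  TopologicalSpace.induced (fun τ => fun a : pedersen R => τ.toFun a) inferInstance

variable {R}

/-- The zero quasitrace. -/
def QuasiTrace.IsZero (τ : QuasiTrace R) : Prop := ∀ a : R, τ.toFun a = 0

/-- The dimension function `d_τ(a) = lim_{ε → 0} τ(f_ε(a))`. -/
def dTau (τ : QuasiTrace R) (a : R) : ℝ≥0∞ :=
  ⨆ n : ℕ, τ.toFun (fEps (1 / (n + 1)) a)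

/-- `ω(a)` relative to a set `S` of quasitraces:
`lim_n sup {d_τ(a) - τ(f_{1/n}(a)) : τ ∈ S}`. -/
def omegaOn (S : Set (QuasiTrace R)) (a : R) : ℝ≥0∞ :=
  ⨅ n : ℕ, ⨆ τ ∈ S, (dTau τ a - τ.toFun (fEps (1 / (n + 1)) a))

/-- The seminorm `‖x‖_{2,S}`. -/
def norm2On (S : Set (QuasiTrace R)) (x : R) : ℝ≥0∞ :=
  ⨆ τ ∈ S, (τ.toFun (star x * x)) ^ (1 / 2 : ℝ)

variable (R)

/-- `R` has (Blackadar's) strict comparison. -/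
def StrictComparison : Prop :=
  ∀ a b : R, 0 ≤ a → 0 ≤ b →
    (∀ τ : QuasiTrace R, ¬ τ.IsZero → dTau τ a < dTau τ b) → CuntzLE a b

/-- `R` is a simple C*-algebra: it is nonzero and has no nontrivial closed two-sided ideals. -/
def IsSimpleCStar : Prop :=
  (∃ x : R, x ≠ 0) ∧
    ∀ I : TwoSidedIdeal R, IsClosed (I : Set R) → (I : Set R) = {0} ∨ (I : Set R) = Set.univ

/-- `R` is σ-unital: it contains a strictly positive element `h`
(equivalently, `Her(h) = R`). -/
def SigmaUnital : Prop := ∃ h : R, 0 ≤ h ∧ her h = Set.univ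

/-- `R` is elementary: isomorphic to the algebra of compact operators on some Hilbert space. -/
def IsElementary : Prop :=
  ∃ (H : Type) (_ : NormedAddCommGroup H) (_ : InnerProductSpace ℂ H) (_ : CompleteSpace H)
    (φ : R →⋆ₙₐ[ℂ] (H →L[ℂ] H)), Function.Injective φ ∧
      Set.range φ = {T : H →L[ℂ] H | IsCompactOperator (⇑T)}

/-- `R` is purely infinite: `R ≇ ℂ` and `b ≲ a` for all nonzero positive `a, b`. -/
def PurelyInfinite : Prop :=
  (¬ ∃ φ : R →⋆ₙₐ[ℂ] ℂ, Function.Bijective φ) ∧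
    ∀ a b : R, 0 ≤ a → 0 ≤ b → a ≠ 0 → b ≠ 0 → CuntzLE b a

/-- `R` is finite: its minimal unitization contains no non-unitary isometry. -/
def IsFiniteCStar : Prop :=
  ∀ v : Unitization ℂ R, star v * v = 1 → v * star v = 1

/-- `R` has stable rank one: the invertible elements are dense in the minimal unitization. -/
def StableRankOne : Prop := Dense {x : Unitization ℂ R | IsUnit x}

variable {R}

/-- `c` represents `n·[a]` in the Cuntz semigroup: it is the sum of `n` mutually
orthogonal positive elements, each Cuntz equivalent to `a`. -/
def IsNFoldRep (n : ℕ) (a c : R) : Prop :=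
  ∃ f : Fin n → R, (∀ i, 0 ≤ f i) ∧ (∀ i, CuntzEq (f i) a) ∧
    (∀ i j, i ≠ j → f i * f j = 0) ∧ c = ∑ i, f i

/-- `s` represents the supremum of the increasing sequence of Cuntz classes `[y n]`. -/
def IsCuntzLUB (y : ℕ → R) (s : R) : Prop :=
  (∀ n, CuntzLE (y n) s) ∧ ∀ c : R, 0 ≤ c → (∀ n, CuntzLE (y n) c) → CuntzLE s c

/-- `[x] ≪ [y]` in the Cuntz semigroup. -/
def CuntzWayBelow (x y : R) : Prop :=
  ∀ yseq : ℕ → R, (∀ n, 0 ≤ yseq n) → (∀ n, CuntzLE (yseq n) (yseq (n + 1))) →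
    ∀ s : R, 0 ≤ s → IsCuntzLUB yseq s → CuntzLE y s → ∃ n₀, CuntzLE x (yseq n₀)

variable (R)

/-- The Cuntz semigroup of `R` is almost unperforated. -/
def AlmostUnperforated : Prop :=
  ∀ (a b : R) (k : ℕ), 1 ≤ k → 0 ≤ a → 0 ≤ b →
    (∃ c d : R, IsNFoldRep (k + 1) a c ∧ IsNFoldRep k b d ∧ CuntzLE c d) → CuntzLE a b

/-- The Cuntz semigroup of `R` is almost divisible. -/
def AlmostDivisible : Prop :=
  ∀ x y : R, 0 ≤ x → 0 ≤ y → CuntzWayBelow x y → ∀ n : ℕ, 1 ≤ n →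
    ∃ z : R, 0 ≤ z ∧ (∃ c : R, IsNFoldRep n z c ∧ CuntzLE c y) ∧
      (∃ c : R, IsNFoldRep (n + 1) z c ∧ CuntzLE x c)

/-! ### The stabilization `W ≅ A ⊗ K` -/

variable (A W : Type*) [NonUnitalCStarAlgebra A] [PartialOrder A] [StarOrderedRing A]
  [NonUnitalCStarAlgebra W] [PartialOrder W] [StarOrderedRing W]

/-- A realization of `W` as the stabilization `A ⊗ K`: the maps `emb i j : a ↦ a ⊗ e_{ij}`
are isometric, satisfy the matrix-unit relations, and have dense joint linear span. -/
structure Stabilization : Type _ where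
  emb : ℕ → ℕ → (A →ₗ[ℂ] W)
  emb_mul : ∀ (i j k l : ℕ) (a b : A),
    emb i j a * emb k l b = if j = k then emb i l (a * b) else 0
  emb_star : ∀ (i j : ℕ) (a : A), star (emb i j a) = emb j i (star a)
  norm_emb : ∀ (i j : ℕ) (a : A), ‖emb i j a‖ = ‖a‖
  dense_span : Dense (Submodule.span ℂ {w : W | ∃ (i j : ℕ) (a : A), w = emb i j a} : Set W)

variable {A W}

/-- The set `QT(A)` of quasitraces normalized on `A ⊆ A ⊗ K`. -/
def QTSet (SB : Stabilization A W) : Set (QuasiTrace W) :=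
  {τ | (⨆ a : {a : A // 0 ≤ a ∧ ‖a‖ ≤ 1}, τ.toFun (SB.emb 0 0 a)) = 1}

/-- The quasitraces normalized on the hereditary subalgebra `Her(c) ⊆ W`. -/
def QTSetHer (c : W) : Set (QuasiTrace W) :=
  {τ : QuasiTrace W |
    (⨆ a : {a : W // a ∈ her c ∧ 0 ≤ a ∧ ‖a‖ ≤ 1}, τ.toFun a) = 1}

/-- `ω(a) = 0` for `a ∈ W = A ⊗ K`, computed relative to `\overline{QT(Her(e))}^w`
for any nonzero `e ∈ Ped(A)₊`. -/
def OmegaZero (SB : Stabilization A W) (a : W) : Prop :=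
  ∀ e : A, 0 ≤ e → e ≠ 0 → e ∈ pedersen A →
    omegaOn (closure (QTSetHer (SB.emb 0 0 e))) a = 0

/-- `A` has tracial approximate oscillation zero. -/
def TAOZ (SB : Stabilization A W) : Prop :=
  ∀ e : A, 0 ≤ e → e ≠ 0 → e ∈ pedersen A →
    ∀ a : W, 0 ≤ a → a ∈ pedersen W →
      ∃ b : ℕ → W, (∀ n, 0 ≤ b n) ∧ (∀ n, ‖b n‖ ≤ 1) ∧
        (∀ n, b n ∈ pedersenIn (her a)) ∧
        Tendsto (fun n => omegaOn (closure (QTSetHer (SB.emb 0 0 e))) (b n)) atTop (𝓝 0) ∧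
        Tendsto (fun n => norm2On (closure (QTSetHer (SB.emb 0 0 e))) (a - b n)) atTop (𝓝 0)

/-! ### Affine functions on the quasitrace cone and the map `Γ` -/

variable (W) in
/-- `ρ = t·τ + (1-t)·σ` as quasitraces. -/
def IsCombo (t : ℝ) (τ σ ρ : QuasiTrace W) : Prop :=
  ∀ a : W, 0 ≤ a →
    ρ.toFun a = ENNReal.ofReal t * τ.toFun a + ENNReal.ofReal (1 - t) * σ.toFun a

variable (W) in
/-- `f` is affine on the quasitrace cone. -/
def IsAffineQT (f : QuasiTrace W → ℝ≥0∞) : Prop :=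
  ∀ t : ℝ, 0 ≤ t → t ≤ 1 → ∀ τ σ ρ : QuasiTrace W, IsCombo W t τ σ ρ →
    f ρ = ENNReal.ofReal t * f τ + ENNReal.ofReal (1 - t) * f σ

variable (W) in
/-- Membership in `Aff₊(QT̃(A))`. -/
def MemAffPlus (f : QuasiTrace W → ℝ≥0∞) : Prop :=
  (∀ τ, f τ = 0) ∨
    (Continuous f ∧ IsAffineQT W f ∧ (∀ τ, f τ < ∞) ∧
      (∀ τ : QuasiTrace W, ¬ τ.IsZero → 0 < f τ) ∧
      (∀ τ : QuasiTrace W, τ.IsZero → f τ = 0))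

variable (W) in
/-- Membership in `LAff₊(QT̃(A))`. -/
def MemLAffPlus (f : QuasiTrace W → ℝ≥0∞) : Prop :=
  ∃ g : ℕ → QuasiTrace W → ℝ≥0∞, (∀ n, MemAffPlus W (g n)) ∧
    (∀ n τ, g n τ ≤ g (n + 1) τ) ∧ ∀ τ, f τ = ⨆ n, g n τ

variable (W) in
/-- The canonical map `Γ : Cu(A) → LAff₊(QT̃(A))`, `Γ([a])(τ) = d_τ(a)`, is surjective. -/
def GammaSurjective : Prop :=
  ∀ f : QuasiTrace W → ℝ≥0∞, MemLAffPlus W f →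
    ∃ a : W, 0 ≤ a ∧ ∀ τ : QuasiTrace W, dTau τ a = f τ


/-- The standard Hilbert `A`-module `ℓ²(A)`, realized inside `W = A ⊗ K` as the closed
"first column" `\overline{W·(A ⊗ e₁₁)}`, with `A`-valued inner product `⟨x, y⟩ = x* y`. -/
def colSpace (SB : Stabilization A W) : Set W :=
  closure {z : W | ∃ (w : W) (c : A), z = w * SB.emb 0 0 c}

/-- The Hilbert `A`-module `H_a = \overline{a · ℓ²(A)}`, realized inside `W = A ⊗ K`. -/
def Hmod (SB : Stabilization A W) (a : W) : Set W :=
  closure {z : W | ∃ (w : W) (c : A), z = a * (w * SB.emb 0 0 c)}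

/-- `N` is a closed Hilbert `A`-submodule (of `ℓ²(A)`, realized inside `W`). -/
def IsClosedSubmodule (SB : Stabilization A W) (N : Set W) : Prop :=
  IsClosed N ∧ (0 : W) ∈ N ∧ (∀ x ∈ N, ∀ y ∈ N, x + y ∈ N) ∧
    (∀ (c : ℂ), ∀ x ∈ N, c • x ∈ N) ∧ ∀ x ∈ N, ∀ c : A, x * SB.emb 0 0 c ∈ N

section P1
set_option linter.unusedSectionVars false
set_option linter.unusedVariables false

lemma cutoff_cont (ε : ℝ) : Continuous (cutoff ε) := by
  unfold cutoff; fun_prop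

lemma cutoff_zero (ε : ℝ) : cutoff ε 0 = 0 := by
  simp [cutoff]

lemma cutoff_nonneg (ε t : ℝ) : 0 ≤ cutoff ε t := by
  simp [cutoff]

lemma cutoff_le_one (ε t : ℝ) : cutoff ε t ≤ 1 := by
  simp [cutoff]

lemma cutoff_one {ε t : ℝ} (hε : 0 < ε) (h : ε ≤ t) : cutoff ε t = 1 := by
  unfold cutoff
  have : 1 ≤ 2 * t / ε - 1 := by
    rw [le_sub_iff_add_le, le_div_iff₀ hε]; linarith
  rw [min_eq_left]; exact le_max_of_le_right this

lemma cutoff_eq_zero {ε t : ℝ} (hε : 0 < ε) (h : t ≤ ε / 2) : cutoff ε t = 0 := by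
  unfold cutoff
  have : 2 * t / ε - 1 ≤ 0 := by
    rw [sub_nonpos, div_le_iff₀ hε]; linarith
  rw [max_eq_left this]; simp

lemma cutoff_mul {ε ε' : ℝ} (hε' : 0 < ε') (h : ε' ≤ ε / 2) (t : ℝ) :
    cutoff ε' t * cutoff ε t = cutoff ε t := by
  have hε : 0 < ε := by linarith
  rcases le_total t (ε / 2) with ht | ht
  · rw [cutoff_eq_zero hε ht, mul_zero]
  · rw [cutoff_one hε' (h.trans ht), one_mul]

lemma cutoff_anti {ε ε' t : ℝ} (hε' : 0 < ε') (h : ε' ≤ ε) (ht : 0 ≤ t) :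
    cutoff ε t ≤ cutoff ε' t := by
  unfold cutoff
  gcongr

variable {B : Type*} [NonUnitalCStarAlgebra B] [PartialOrder B] [StarOrderedRing B]

lemma fEps_nonneg (ε : ℝ) (a : B) : 0 ≤ fEps ε a :=
  cfcₙ_nonneg (fun t _ => cutoff_nonneg ε t)

lemma fEps_norm_le (ε : ℝ) (a : B) : ‖fEps ε a‖ ≤ 1 :=
  norm_cfcₙ_le (fun t _ => by
    rw [Real.norm_of_nonneg (cutoff_nonneg ε t)]; exact cutoff_le_one ε t)

lemma cont_on {f : ℝ → ℝ} (hf : Continuous f) {s : Set ℝ} : ContinuousOn f s := hf.continuousOn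

/-- multiplication of functional calculi for globally continuous functions -/
lemma cfm {f g : ℝ → ℝ} (hf : Continuous f) (hg : Continuous g) (hf0 : f 0 = 0) (hg0 : g 0 = 0)
    (a : B) : cfcₙ f a * cfcₙ g a = cfcₙ (fun t => f t * g t) a :=
  (cfcₙ_mul f g a hf.continuousOn hf0 hg.continuousOn hg0).symm

lemma cfa {f g : ℝ → ℝ} (hf : Continuous f) (hg : Continuous g) (hf0 : f 0 = 0) (hg0 : g 0 = 0)
    (a : B) : cfcₙ f a + cfcₙ g a = cfcₙ (fun t => f t + g t) a :=
  (cfcₙ_add f g a hf.continuousOn hf0 hg.continuousOn hg0).symm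

lemma cfs {f g : ℝ → ℝ} (hf : Continuous f) (hg : Continuous g) (hf0 : f 0 = 0) (hg0 : g 0 = 0)
    (a : B) : cfcₙ f a - cfcₙ g a = cfcₙ (fun t => f t - g t) a :=
  (cfcₙ_sub f g a hf.continuousOn hf0 hg.continuousOn hg0).symm

lemma cfx {f : ℝ → ℝ} (hf : Continuous f) (hf0 : f 0 = 0)
    {a : B} (ha : 0 ≤ a) : a * cfcₙ f a = cfcₙ (fun t => t * f t) a := by
  conv_lhs => enter [1]; rw [← cfcₙ_id' ℝ a (ha := IsSelfAdjoint.of_nonneg ha)]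
  exact cfm continuous_id' hf rfl hf0 a

lemma cfx' {f : ℝ → ℝ} (hf : Continuous f) (hf0 : f 0 = 0)
    {a : B} (ha : 0 ≤ a) : cfcₙ f a * a = cfcₙ (fun t => f t * t) a := by
  conv_lhs => enter [2]; rw [← cfcₙ_id' ℝ a (ha := IsSelfAdjoint.of_nonneg ha)]
  exact cfm hf continuous_id' hf0 rfl a

lemma cf_congr {f g : ℝ → ℝ} {a : B} (ha : 0 ≤ a) (h : ∀ t, 0 ≤ t → f t = g t) :
    cfcₙ f a = cfcₙ g a :=
  cfcₙ_congr (fun t ht => h t (quasispectrum_nonneg_of_nonneg a ha t ht))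

lemma cf_mono {f g : ℝ → ℝ} (hf : Continuous f) (hg : Continuous g) (hf0 : f 0 = 0) (hg0 : g 0 = 0)
    {a : B} (ha : 0 ≤ a) (h : ∀ t, 0 ≤ t → f t ≤ g t) :
    cfcₙ f a ≤ cfcₙ g a :=
  cfcₙ_mono (fun t ht => h t (quasispectrum_nonneg_of_nonneg a ha t ht)) hf.continuousOn
    hg.continuousOn hf0 hg0

lemma cf_nonneg {f : ℝ → ℝ} {a : B} (ha : 0 ≤ a) (h : ∀ t, 0 ≤ t → 0 ≤ f t) :
    0 ≤ cfcₙ f a :=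
  cfcₙ_nonneg (fun t ht => h t (quasispectrum_nonneg_of_nonneg a ha t ht))

lemma cf_norm {f : ℝ → ℝ} {a : B} (ha : 0 ≤ a) {c : ℝ} (hc : 0 ≤ c)
    (h : ∀ t, 0 ≤ t → |f t| ≤ c) : ‖cfcₙ f a‖ ≤ c :=
  norm_cfcₙ_le (fun t ht => h t (quasispectrum_nonneg_of_nonneg a ha t ht))

lemma cf_comm {f g : ℝ → ℝ} (a : B) : cfcₙ f a * cfcₙ g a = cfcₙ g a * cfcₙ f a :=
  (cfcₙ_commute_cfcₙ f g a).eq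

lemma cf_star (f : ℝ → ℝ) (a : B) : star (cfcₙ f a) = cfcₙ f a :=
  (IsSelfAdjoint.cfcₙ (f := f) (a := a)).star_eq

lemma star_pos {a : B} (ha : 0 ≤ a) : star a = a := (IsSelfAdjoint.of_nonneg ha).star_eq

lemma fEps_star (ε : ℝ) (a : B) : star (fEps ε a) = fEps ε a := cf_star _ _

lemma fEps_mul {ε ε' : ℝ} (hε' : 0 < ε') (h : ε' ≤ ε / 2) (a : B) :
    fEps ε' a * fEps ε a = fEps ε a := by
  unfold fEps
  rw [cfm (cutoff_cont _) (cutoff_cont _) (cutoff_zero _) (cutoff_zero _)]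
  congr 1; funext t; exact cutoff_mul hε' h t

lemma fEps_mul' {ε ε' : ℝ} (hε' : 0 < ε') (h : ε' ≤ ε / 2) (a : B) :
    fEps ε a * fEps ε' a = fEps ε a := by
  have := fEps_mul hε' h a
  unfold fEps at this ⊢; rw [cf_comm]; exact this

/-! right ideals -/
def rcl (c : B) : Set B := closure (Set.range (fun y => c * y))

lemma rcl_closed (c : B) : IsClosed (rcl c) := isClosed_closure

lemma mul_mem_rcl (c y : B) : c * y ∈ rcl c := subset_closure ⟨y, rfl⟩

lemma rcl_induct {c x : B} (hx : x ∈ rcl c) {S : Set B} (hS : IsClosed S)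
    (h : ∀ y, c * y ∈ S) : x ∈ S := by
  have : rcl c ⊆ S := closure_minimal (by rintro _ ⟨y, rfl⟩; exact h y) hS
  exact this hx

lemma rcl_mul {c x : B} (hx : x ∈ rcl c) (z : B) : x * z ∈ rcl c := by
  refine rcl_induct (S := (fun x => x * z) ⁻¹' rcl c) hx
    ((rcl_closed c).preimage (by fun_prop)) (fun y => ?_)
  simp only [Set.mem_preimage, mul_assoc]; exact mul_mem_rcl _ _

lemma rcl_add {c x y : B} (hx : x ∈ rcl c) (hy : y ∈ rcl c) : x + y ∈ rcl c := by
  refine rcl_induct (S := (fun x => x + y) ⁻¹' rcl c) hx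
    ((rcl_closed c).preimage (by fun_prop)) (fun z => ?_)
  refine rcl_induct (S := (fun y => c * z + y) ⁻¹' rcl c) hy
    ((rcl_closed c).preimage (by fun_prop)) (fun z' => ?_)
  simp only [Set.mem_preimage, ← mul_add]; exact mul_mem_rcl _ _

lemma rcl_smul {c x : B} (hx : x ∈ rcl c) (r : ℝ) : r • x ∈ rcl c := by
  refine rcl_induct (S := (fun x => r • x) ⁻¹' rcl c) hx
    ((rcl_closed c).preimage (by fun_prop)) (fun y => ?_)
  simp only [Set.mem_preimage, ← mul_smul_comm]; exact mul_mem_rcl _ _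

lemma rcl_sub {c x y : B} (hx : x ∈ rcl c) (hy : y ∈ rcl c) : x - y ∈ rcl c := by
  have := rcl_add hx (rcl_smul hy (-1)); simpa [sub_eq_add_neg] using this

lemma rcl_zero (c : B) : (0 : B) ∈ rcl c := by simpa using mul_mem_rcl c 0

lemma rcl_trans {b c x : B} (hx : x ∈ rcl c) (hc : c ∈ rcl b) : x ∈ rcl b :=
  rcl_induct hx (rcl_closed b) (fun y => rcl_mul hc y)

lemma rcl_ann {c x y : B} (hx : x ∈ rcl c) (h : y * c = 0) : y * x = 0 :=
  rcl_induct (S := {x | y * x = 0}) hx (isClosed_eq (by fun_prop) (by fun_prop))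
    (fun z => by simp [← mul_assoc, h])

lemma rcl_unit {c x y : B} (hx : x ∈ rcl c) (h : y * c = c) : y * x = x :=
  rcl_induct (S := {x | y * x = x}) hx (isClosed_eq (by fun_prop) (by fun_prop))
    (fun z => by simp [← mul_assoc, h])

/-- divided cutoff -/
def dcut (ε : ℝ) : ℝ → ℝ := fun t => cutoff ε t / max t (ε / 2)

lemma dcut_cont {ε : ℝ} (hε : 0 < ε) : Continuous (dcut ε) := by
  unfold dcut
  refine (cutoff_cont ε).div (by fun_prop) (fun t => ?_)
  have : 0 < ε / 2 := by linarith
  exact (lt_max_of_lt_right this).ne'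

lemma dcut_zero (ε : ℝ) : dcut ε 0 = 0 := by simp [dcut, cutoff_zero]

lemma mul_dcut {ε : ℝ} (hε : 0 < ε) (t : ℝ) : t * dcut ε t = cutoff ε t := by
  unfold dcut
  rcases le_total t (ε / 2) with h | h
  · rw [cutoff_eq_zero hε h]; simp
  · rw [max_eq_left h]; field_simp [show t ≠ 0 by intro h0; linarith]

lemma fEps_eq_mul {ε : ℝ} (hε : 0 < ε) {a : B} (ha : 0 ≤ a) :
    fEps ε a = a * cfcₙ (dcut ε) a := by
  rw [cfx (dcut_cont hε) (dcut_zero ε) ha]; unfold fEps; congr 1; funext t; rw [mul_dcut hε]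

lemma fEps_eq_mul' {ε : ℝ} (hε : 0 < ε) {a : B} (ha : 0 ≤ a) :
    fEps ε a = cfcₙ (dcut ε) a * a := by
  rw [cfx' (dcut_cont hε) (dcut_zero ε) ha]; unfold fEps; congr 1; funext t
  rw [mul_comm, mul_dcut hε]

lemma fEps_mem {ε : ℝ} (hε : 0 < ε) {a : B} (ha : 0 ≤ a) : fEps ε a ∈ rcl a := by
  rw [fEps_eq_mul hε ha]; exact mul_mem_rcl _ _

/-- cfcₙ of t*f t -/
lemma cf_mem_of {f : ℝ → ℝ} (hf : Continuous f) (hf0 : f 0 = 0)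
    {a : B} (ha : 0 ≤ a) : cfcₙ (fun t => t * f t) a ∈ rcl a := by
  rw [← cfx hf hf0 ha]; exact mul_mem_rcl _ _

lemma norm_fEps_mul_sub {ε : ℝ} (hε : 0 < ε) {a : B} (ha : 0 ≤ a) : ‖fEps ε a * a - a‖ ≤ ε := by
  have : fEps ε a * a - a = cfcₙ (fun t => cutoff ε t * t - t) a := by
    rw [← cfs (by have := cutoff_cont ε; fun_prop) continuous_id' (by simp) rfl,
      cfcₙ_id' ℝ a (ha := IsSelfAdjoint.of_nonneg ha), ← cfx' (cutoff_cont ε) (cutoff_zero ε) ha]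
    rfl
  rw [this]
  refine cf_norm ha hε.le (fun t ht => ?_)
  have h1 := cutoff_nonneg ε t
  have h2 := cutoff_le_one ε t
  rcases le_total ε t with h | h
  · rw [cutoff_one hε h]; simpa using hε.le
  · rw [abs_le]; constructor <;> nlinarith

lemma approx_unit_seq {δ : ℕ → ℝ} (hδ : ∀ n, 0 < δ n) (hδ0 : Tendsto δ atTop (𝓝 0))
    {a x : B} (ha : 0 ≤ a) (hx : x ∈ rcl a) :
    Tendsto (fun n => fEps (δ n) a * x) atTop (𝓝 x) := by
  rw [Metric.tendsto_atTop]
  intro ε hε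
  obtain ⟨_, ⟨y, rfl⟩, hy⟩ := Metric.mem_closure_iff.1 hx (ε / 3) (by linarith)
  have h1 : Tendsto (fun n => δ n * ‖y‖) atTop (𝓝 0) := by simpa using hδ0.mul_const ‖y‖
  obtain ⟨N, hN⟩ := Metric.tendsto_atTop.1 h1 (ε / 3) (by linarith)
  refine ⟨N, fun n hn => ?_⟩
  have h2 := hN n hn
  rw [Real.dist_eq, sub_zero] at h2
  have h2' := (abs_lt.1 h2).2
  have h3 : ‖(fEps (δ n) a * a - a) * y‖ ≤ δ n * ‖y‖ :=
    (norm_mul_le _ _).trans (mul_le_mul_of_nonneg_right (norm_fEps_mul_sub (hδ n) ha) (norm_nonneg _))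
  rw [dist_eq_norm] at hy ⊢
  have h4 : ‖fEps (δ n) a * (x - a * y)‖ ≤ ‖x - a * y‖ :=
    (norm_mul_le _ _).trans (mul_le_of_le_one_left (norm_nonneg _) (fEps_norm_le _ _))
  have h5 : fEps (δ n) a * x - x = fEps (δ n) a * (x - a * y) + (fEps (δ n) a * a - a) * y
    - (x - a * y) := by noncomm_ring
  rw [h5]
  calc _ ≤ ‖fEps (δ n) a * (x - a * y)‖ + ‖(fEps (δ n) a * a - a) * y‖ + ‖x - a * y‖ :=
        (norm_sub_le _ _).trans (add_le_add_left (norm_add_le _ _) _)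
    _ < ε := by linarith

lemma one_div_pos' (n : ℕ) : (0 : ℝ) < 1 / (n + 1) := by positivity

lemma approx_unit {a x : B} (ha : 0 ≤ a) (hx : x ∈ rcl a) :
    Tendsto (fun n : ℕ => fEps (1 / ((n : ℝ) + 1)) a * x) atTop (𝓝 x) :=
  approx_unit_seq (fun n => one_div_pos' n) tendsto_one_div_add_atTop_nhds_zero_nat ha hx

lemma mem_rcl_self {a : B} (ha : 0 ≤ a) : a ∈ rcl a := by
  have h : ∀ n : ℕ, fEps (1 / ((n : ℝ) + 1)) a * a ∈ rcl a := fun n =>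
    rcl_mul (fEps_mem (one_div_pos' n) ha) _
  refine (rcl_closed a).mem_of_tendsto (b := atTop)
    (f := fun n : ℕ => fEps (1 / ((n : ℝ) + 1)) a * a) ?_ (.of_forall h)
  rw [tendsto_iff_norm_sub_tendsto_zero]
  exact squeeze_zero (fun _ => norm_nonneg _) (fun n => norm_fEps_mul_sub (one_div_pos' n) ha)
    tendsto_one_div_add_atTop_nhds_zero_nat

/-- order lemma -/
lemma mem_rcl_of_le {P y : B} (hy : 0 ≤ y) {r : ℝ} (h : P * star P ≤ r • y) : P ∈ rcl y := by
  have hmem : ∀ n : ℕ, fEps (1 / ((n : ℝ) + 1)) y * P ∈ rcl y := fun n =>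
    rcl_mul (fEps_mem (one_div_pos' n) hy) _
  refine (rcl_closed y).mem_of_tendsto (b := atTop)
    (f := fun n : ℕ => fEps (1 / ((n : ℝ) + 1)) y * P) ?_ (.of_forall hmem)
  rw [tendsto_iff_norm_sub_tendsto_zero]
  have key : ∀ n : ℕ, ‖fEps (1 / ((n : ℝ) + 1)) y * P - P‖ ^ 2 ≤ |r| * (1 / ((n : ℝ) + 1)) * 2 := by
    intro n
    set ε := 1 / ((n : ℝ) + 1)
    have hε : 0 < ε := one_div_pos' n
    set f := fEps ε y
    have hf : star f = f := fEps_star _ _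
    have h1 : ‖f * P - P‖ ^ 2 = ‖(f * P - P) * star (f * P - P)‖ := by
      rw [CStarRing.norm_self_mul_star, sq]
    have h2 : (f * P - P) * star (f * P - P) ≤ r • (f * y * f - f * y - y * f + y) := by
      have hnn : 0 ≤ r • y - P * star P := sub_nonneg.2 h
      obtain ⟨s, hs⟩ := CStarAlgebra.nonneg_iff_eq_star_mul_self.1 hnn
      have h0 : 0 ≤ star (s * f - s) * (s * f - s) := star_mul_self_nonneg _
      have : star (s * f - s) * (s * f - s) =
          f * (star s * s) * f - f * (star s * s) - (star s * s) * f + star s * s := by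
        simp only [star_sub, star_mul, hf]; noncomm_ring
      rw [this, ← hs] at h0
      rw [← sub_nonneg]
      convert h0 using 1
      simp only [star_sub, star_mul, hf, mul_sub, sub_mul, smul_add, smul_sub, mul_smul_comm,
        smul_mul_assoc, mul_assoc]
      abel
    have h3 : ‖f * y * f - f * y - y * f + y‖ ≤ ε * 2 := by
      have e : f * y * f - f * y - y * f + y = (f * y - y) * f - (f * y - y) := by noncomm_ring
      rw [e]
      have := norm_fEps_mul_sub hε hy
      have h4 : ‖(f * y - y) * f‖ ≤ ε :=
        (norm_mul_le _ _).trans (by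
          have := fEps_norm_le ε y
          nlinarith [norm_nonneg f, norm_nonneg (f * y - y)])
      linarith [norm_sub_le ((f * y - y) * f) (f * y - y)]
    rw [h1]
    refine (CStarAlgebra.norm_le_norm_of_nonneg_of_le (mul_star_self_nonneg _) h2).trans ?_
    rw [norm_smul, Real.norm_eq_abs, mul_assoc |r|]
    exact mul_le_mul_of_nonneg_left h3 (abs_nonneg _)
  have h2 : Tendsto (fun n : ℕ => ‖fEps (1 / ((n : ℝ) + 1)) y * P - P‖ ^ 2) atTop (𝓝 0) := by
    refine squeeze_zero (fun _ => by positivity) key ?_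
    have := (tendsto_one_div_add_atTop_nhds_zero_nat (𝕜 := ℝ)).const_mul |r| |>.mul_const 2
    simpa using this
  have h3 := h2.sqrt
  simpa [Real.sqrt_sq] using h3

lemma mem_rcl_mul_star (P : B) : P ∈ rcl (P * star P) :=
  mem_rcl_of_le (mul_star_self_nonneg P) (r := 1) (by simp)

lemma mem_rcl_sq {p : B} (hp : 0 ≤ p) : p ∈ rcl (p * p) := by
  have := mem_rcl_mul_star p; rwa [star_pos hp] at this

lemma sqrt_mem_rcl {y : B} (hy : 0 ≤ y) : CFC.sqrt y ∈ rcl y := by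
  have h := mem_rcl_mul_star (CFC.sqrt y)
  rwa [star_pos (CFC.sqrt_nonneg y), CFC.sqrt_mul_sqrt_self y hy] at h

lemma le_mem_rcl {x y : B} (hx : 0 ≤ x) (hy : 0 ≤ y) {r : ℝ} (h : x ≤ r • y) : x ∈ rcl y := by
  have h1 : CFC.sqrt x ∈ rcl y := by
    refine mem_rcl_of_le hy (r := r) ?_
    rwa [star_pos (CFC.sqrt_nonneg x), CFC.sqrt_mul_sqrt_self x hx]
  have := rcl_mul h1 (CFC.sqrt x)
  rwa [CFC.sqrt_mul_sqrt_self x hx] at this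

lemma two_sq_ineq (X Y : B) :
    star (X + Y) * (X + Y) ≤ (2 : ℝ) • (star X * X + star Y * Y) := by
  rw [← sub_nonneg]
  have : (2 : ℝ) • (star X * X + star Y * Y) - star (X + Y) * (X + Y) =
      star (X - Y) * (X - Y) := by
    rw [two_smul]; simp only [star_add, star_sub]; noncomm_ring
  rw [this]; exact star_mul_self_nonneg _

lemma conj_le {x y : B} (h : x ≤ y) (p : B) (hp : star p = p) : p * x * p ≤ p * y * p := by
  have := star_left_conjugate_le_conjugate h p; rwa [hp] at this

lemma conj_nonneg' {x : B} (h : 0 ≤ x) (p : B) (hp : star p = p) : 0 ≤ p * x * p := by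
  have := star_left_conjugate_nonneg h p; rwa [hp] at this

lemma conj_norm_le {x : B} (hx : IsSelfAdjoint x) (p : B) (hp : star p = p) :
    p * x * p ≤ ‖x‖ • (p * p) := by
  have := CStarAlgebra.star_left_conjugate_le_norm_smul (a := p) (b := x); rwa [hp] at this
end P1

section P2
set_option linter.unusedSectionVars false
set_option linter.unusedVariables false
variable {B : Type*} [NonUnitalCStarAlgebra B] [PartialOrder B] [StarOrderedRing B]

/-- if `h p = p` and `G - ε h² ≥ 0` with `G = h Q* Q h` then `p = Z* Q p` with `Z ∈ Q B`. -/
lemma factor_lemma {h p Q : B} {ε : ℝ} (hε : 0 < ε) (hh : star h = h) (hp : h * p = p)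
    (hK : ε • (h * h) ≤ h * (star Q * Q) * h) :
    ∃ Z : B, (∃ y, Z = Q * y) ∧ star Z * (Q * p) = p := by
  set K := h * (star Q * Q) * h - ε • (h * h) with hKdef
  have hK0 : 0 ≤ K := sub_nonneg.2 hK
  set l := cfcₙ (fun t : ℝ => t / (|t| + ε)) K with hl
  have hlc : Continuous (fun t : ℝ => t / (|t| + ε)) :=
    Continuous.div (by fun_prop) (by fun_prop) (fun t => by positivity)
  have hls : star l = l := cf_star _ _
  have h1 : l * K + ε • l = K := by
    rw [hl, cfx' hlc (by simp) hK0, ← cfcₙ_smul ε _ K hlc.continuousOn (by simp),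
      cfa (by fun_prop) (by fun_prop) (by simp) (by simp)]
    conv_rhs => rw [← cfcₙ_id' ℝ K (ha := IsSelfAdjoint.of_nonneg hK0)]
    refine cf_congr hK0 (fun t ht => ?_)
    rw [abs_of_nonneg ht, smul_eq_mul]
    field_simp
  refine ⟨ε⁻¹ • (Q * h - Q * h * l), ⟨ε⁻¹ • (h - h * l), ?_⟩, ?_⟩
  · rw [mul_smul_comm]; congr 1; noncomm_ring
  · have h2 : h * (star Q * Q) * h * p = K * p + ε • p := by
      rw [hKdef, sub_mul, smul_mul_assoc, mul_assoc h h p, hp, hp]; abel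
    have h3 : l * (h * (star Q * Q) * h * p) = K * p := by
      rw [h2, mul_add, ← mul_assoc, mul_smul_comm, ← smul_mul_assoc, ← add_mul, h1]
    have h4 : star (ε⁻¹ • (Q * h - Q * h * l)) * (Q * p) =
        ε⁻¹ • (h * (star Q * Q) * h * p - l * (h * (star Q * Q) * h * p)) := by
      have e : h * (star Q * Q) * h * p = h * star Q * Q * p := by
        rw [mul_assoc _ h p, hp]; simp only [mul_assoc]
      rw [e]
      simp only [star_smul, star_sub, star_mul, hh, hls, star_trivial, smul_mul_assoc, sub_mul,
        mul_assoc]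
    rw [h4, h3, h2, add_sub_cancel_left, smul_smul, inv_mul_cancel₀ hε.ne', one_smul]

/-- Rørdam lemma -/
lemma rordam {r c : B} (hr : 0 ≤ r) (hc : 0 ≤ c) (hrc : CuntzLE r c) {η : ℝ} (hη : 0 < η) :
    ∃ v ∈ rcl c, star v * v = fEps η r * fEps η r := by
  obtain ⟨x, hx⟩ := hrc
  obtain ⟨n, hn⟩ := ((tendsto_order.1 hx).2 (η / 8) (by linarith)).exists
  set Q := CFC.sqrt c * x n with hQ
  have hQQ : star Q * Q = star (x n) * c * x n := by
    rw [hQ, star_mul, star_pos (CFC.sqrt_nonneg c)]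
    rw [mul_assoc, ← mul_assoc (CFC.sqrt c), CFC.sqrt_mul_sqrt_self c hc, mul_assoc]
  set h := fEps (η / 2) r with hh
  set p := fEps η r with hp
  have hs : star h = h := fEps_star _ _
  have hhp : h * p = p := fEps_mul (by linarith) le_rfl r
  have h1 : (η / 4) • (h * h) ≤ h * r * h := by
    have hcc := cutoff_cont (η / 2)
    rw [hh, fEps, cfx' (cutoff_cont _) (cutoff_zero _) hr,
      cfm (cutoff_cont _) (cutoff_cont _) (cutoff_zero _) (cutoff_zero _),
      cfm (by fun_prop) (cutoff_cont _) (by simp) (cutoff_zero _),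
      ← cfcₙ_smul (η / 4) _ r (by fun_prop) (by simp [cutoff_zero])]
    refine cf_mono (by fun_prop) (by fun_prop) (by simp [cutoff_zero]) (by simp [cutoff_zero]) hr
      (fun t ht => ?_)
    rw [smul_eq_mul]
    rcases le_total t (η / 4) with h | h
    · rw [cutoff_eq_zero (by linarith) (by linarith)]; simp
    · nlinarith [mul_nonneg (cutoff_nonneg (η / 2) t) (cutoff_nonneg (η / 2) t)]
  have hsa : IsSelfAdjoint (r - star Q * Q) :=
    (IsSelfAdjoint.of_nonneg hr).sub (IsSelfAdjoint.star_mul_self _)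
  have h2 : h * (r - star Q * Q) * h ≤ (η / 8) • (h * h) := by
    refine (conj_norm_le hsa h hs).trans ?_
    have hhh : 0 ≤ h * h := by have := star_mul_self_nonneg h; rwa [hs] at this
    refine smul_le_smul_of_nonneg_right ?_ hhh
    rw [hQQ]; exact hn.le
  have h3 : (η / 8) • (h * h) ≤ h * (star Q * Q) * h := by
    have e : h * (star Q * Q) * h = h * r * h - h * (r - star Q * Q) * h := by noncomm_ring
    rw [e]
    have e2 : (η / 8) • (h * h) = (η / 4) • (h * h) - (η / 8) • (h * h) := by
      rw [← sub_smul]; congr 1; ring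
    rw [e2]
    exact sub_le_sub h1 h2
  obtain ⟨Z, ⟨y, hy⟩, hZ⟩ := factor_lemma (by linarith) hs hhp h3
  have hps : star p = p := fEps_star _ _
  refine ⟨CFC.sqrt (Z * star Z) * (Q * p), ?_, ?_⟩
  · refine rcl_mul ?_ _
    refine rcl_trans (sqrt_mem_rcl (mul_star_self_nonneg Z)) ?_
    refine rcl_mul ?_ _
    rw [hy, hQ]
    exact rcl_mul (rcl_mul (sqrt_mem_rcl hc) _) _
  · rw [star_mul, star_pos (CFC.sqrt_nonneg _), mul_assoc, ← mul_assoc (CFC.sqrt _),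
      CFC.sqrt_mul_sqrt_self _ (mul_star_self_nonneg Z), mul_assoc Z, hZ, ← mul_assoc]
    have := congrArg star hZ
    rw [star_mul, star_star] at this
    rw [this, hps]
end P2

section P3
set_option linter.unusedSectionVars false
set_option linter.unusedVariables false
variable {B : Type*} [NonUnitalCStarAlgebra B] [PartialOrder B] [StarOrderedRing B]

/-- pre-quasitrace -/
structure PQ (t : B → ℝ≥0∞) : Prop where
  zero : t 0 = 0
  smul : ∀ (r : ℝ) (a : B), 0 < r → 0 ≤ a → t (r • a) = ENNReal.ofReal r * t a
  add : ∀ a b : B, 0 ≤ a → 0 ≤ b → a * b = b * a → t (a + b) = t a + t b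
  trace : ∀ x : B, t (star x * x) = t (x * star x)

lemma QuasiTrace.pq (τ : QuasiTrace B) : PQ τ.toFun :=
  ⟨τ.map_zero, τ.map_smul, τ.map_add_of_commute, τ.map_star_mul_self⟩

lemma PQ.mono {t : B → ℝ≥0∞} (ht : PQ t) {x y : B} (hx : 0 ≤ x) (hxy : x ≤ y)
    (hc : x * y = y * x) : t x ≤ t y := by
  have h := ht.add x (y - x) hx (sub_nonneg.2 hxy) (by rw [mul_sub, sub_mul, hc])
  rw [add_sub_cancel] at h
  rw [h]; exact le_self_add

lemma sq_le_self {u : B} (hu : 0 ≤ u) (hu1 : ‖u‖ ≤ 1) : u * u ≤ u := by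
  set s := CFC.sqrt u
  have hs : 0 ≤ s := CFC.sqrt_nonneg u
  have hss : s * s = u := CFC.sqrt_mul_sqrt_self u hu
  have h1 := conj_norm_le (IsSelfAdjoint.of_nonneg hu) s (star_pos hs)
  have h2 : s * u * s = u * u := by rw [← hss]; noncomm_ring
  rw [h2, hss] at h1
  refine h1.trans ?_
  have := smul_le_smul_of_nonneg_right hu1 hu
  simpa using this

lemma PQ.L2 {t : B → ℝ≥0∞} (ht : PQ t) {u z : B} (hu : 0 ≤ u) (hu1 : ‖u‖ ≤ 1)
    (hz : 0 ≤ z) (hz1 : ‖z‖ ≤ 1) (huz : u * z = z) : t z ≤ t u := by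
  have hzu : z * u = z := by
    have := congrArg star huz; rwa [star_mul, star_pos hu, star_pos hz] at this
  refine ht.mono hz ?_ (by rw [huz, hzu])
  have h1 := conj_norm_le (IsSelfAdjoint.of_nonneg hz) u (star_pos hu)
  rw [huz, hzu] at h1
  have huu : 0 ≤ u * u := by have := star_mul_self_nonneg u; rwa [star_pos hu] at this
  have h2 : ‖z‖ • (u * u) ≤ u * u := by
    simpa using smul_le_smul_of_nonneg_right hz1 huu
  exact h1.trans (h2.trans (sq_le_self hu hu1))

lemma lsc_lim (τ : QuasiTrace B) {z : ℕ → B} {z0 : B} (hz : ∀ n, 0 ≤ z n) (hz0 : 0 ≤ z0)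
    (hlim : Tendsto z atTop (𝓝 z0)) {M : ℝ≥0∞} (hM : ∀ n, τ.toFun (z n) ≤ M) :
    τ.toFun z0 ≤ M := by
  by_contra hcon
  push Not at hcon
  have h1 := τ.lowerSemicontinuousOn z0 hz0 M hcon
  have h2 : Tendsto z atTop (𝓝[{a : B | 0 ≤ a}] z0) :=
    tendsto_nhdsWithin_iff.2 ⟨hlim, .of_forall hz⟩
  obtain ⟨n, hn⟩ := (h2.eventually h1).exists
  exact absurd (hM n) (not_le.2 hn)

lemma tau_anti (τ : QuasiTrace B) {x : B} (hx : 0 ≤ x) {ε ε' : ℝ} (hε' : 0 < ε') (h : ε' ≤ ε) :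
    τ.toFun (fEps ε x) ≤ τ.toFun (fEps ε' x) :=
  τ.pq.mono (fEps_nonneg _ _) (cf_mono (cutoff_cont _) (cutoff_cont _) (cutoff_zero _)
    (cutoff_zero _) hx (fun t ht => cutoff_anti hε' h ht)) (cf_comm x)

lemma le_dTau (τ : QuasiTrace B) {x : B} (hx : 0 ≤ x) {ε : ℝ} (hε : 0 < ε) :
    τ.toFun (fEps ε x) ≤ dTau τ x := by
  obtain ⟨n, hn⟩ := exists_nat_one_div_lt hε
  refine (tau_anti τ hx (one_div_pos' n) hn.le).trans ?_
  exact le_iSup (fun n : ℕ => τ.toFun (fEps (1 / ((n : ℝ) + 1)) x)) n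

lemma conj_lim {u : ℕ → B} {z : B} (hu1 : ∀ n, ‖u n‖ ≤ 1) (hus : ∀ n, star (u n) = u n)
    (hz : 0 ≤ z) (h : Tendsto (fun n => u n * z) atTop (𝓝 z)) :
    Tendsto (fun n => u n * z * u n) atTop (𝓝 z) := by
  have h2 : Tendsto (fun n => z * u n) atTop (𝓝 z) := by
    have := h.star
    simpa [hus, star_pos hz] using this
  rw [tendsto_iff_norm_sub_tendsto_zero] at h h2 ⊢
  refine squeeze_zero (fun _ => norm_nonneg _) (fun n => ?_) (by simpa using h.add h2)
  have e : u n * z * u n - z = u n * (z * u n - z) + (u n * z - z) := by noncomm_ring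
  rw [e]
  have : ‖u n * (z * u n - z)‖ ≤ ‖z * u n - z‖ :=
    (norm_mul_le _ _).trans (mul_le_of_le_one_left (norm_nonneg _) (hu1 n))
  linarith [norm_add_le (u n * (z * u n - z)) (u n * z - z)]

lemma tau_le_gen (τ : QuasiTrace B) {u u' : ℕ → B} {z : B} {M : ℝ≥0∞} (hu'0 : ∀ n, 0 ≤ u' n)
    (hu'1 : ∀ n, ‖u' n‖ ≤ 1) (hu1 : ∀ n, ‖u n‖ ≤ 1) (hus : ∀ n, star (u n) = u n)
    (huu : ∀ n, u' n * u n = u n) (hz : 0 ≤ z) (hz1 : ‖z‖ ≤ 1)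
    (h : Tendsto (fun n => u n * z) atTop (𝓝 z)) (hM : ∀ n, τ.toFun (u' n) ≤ M) :
    τ.toFun z ≤ M := by
  refine lsc_lim τ (fun n => conj_nonneg' hz (u n) (hus n)) hz (conj_lim hu1 hus hz h)
    (fun n => (τ.pq.L2 (hu'0 n) (hu'1 n) (conj_nonneg' hz (u n) (hus n)) ?_ ?_).trans (hM n))
  · calc ‖u n * z * u n‖ ≤ ‖u n‖ * ‖z‖ * ‖u n‖ :=
        (norm_mul_le _ _).trans (mul_le_mul_of_nonneg_right (norm_mul_le _ _) (norm_nonneg _))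
      _ ≤ 1 * 1 * 1 := by gcongr <;> exact hu1 n
      _ = 1 := by norm_num
  · rw [← mul_assoc, ← mul_assoc, huu]

lemma tau_le_d (τ : QuasiTrace B) {z y : B} (hy : 0 ≤ y) (hz : 0 ≤ z) (hz1 : ‖z‖ ≤ 1)
    (hzy : z ∈ rcl y) : τ.toFun z ≤ dTau τ y :=
  tau_le_gen τ (u := fun n => fEps (1 / ((n : ℝ) + 1)) y)
    (u' := fun n => fEps (1 / ((n : ℝ) + 1) / 2) y) (fun n => fEps_nonneg _ _)
    (fun n => fEps_norm_le _ _) (fun n => fEps_norm_le _ _) (fun n => fEps_star _ _)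
    (fun n => fEps_mul (by have := one_div_pos' n; linarith) le_rfl y) hz hz1
    (approx_unit hy hzy) (fun n => le_dTau τ hy (by have := one_div_pos' n; linarith))

lemma norm_mul_star_le {Y : B} (hY1 : ‖Y‖ ≤ 1) : ‖Y * star Y‖ ≤ 1 := by
  rw [CStarRing.norm_self_mul_star]; nlinarith [norm_nonneg Y]

lemma tau_star_le_d (τ : QuasiTrace B) {Y y : B} (hy : 0 ≤ y) (hY1 : ‖Y‖ ≤ 1)
    (hYy : Y ∈ rcl y) : τ.toFun (star Y * Y) ≤ dTau τ y := by
  rw [τ.map_star_mul_self]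
  exact tau_le_d τ hy (mul_star_self_nonneg Y) (norm_mul_star_le hY1) (rcl_mul hYy _)

/-- `f_ε(Q*Q) = (Qm)*(Qm)` -/
lemma fEps_star_mul {ε : ℝ} (hε : 0 < ε) (Q : B) :
    ∃ m : B, star (Q * m) * (Q * m) = fEps ε (star Q * Q) ∧ ‖Q * m‖ ≤ 1 := by
  set x := star Q * Q
  have hx : 0 ≤ x := star_mul_self_nonneg Q
  have hcc : Continuous (fun t => √(dcut ε t)) := (dcut_cont hε).sqrt
  have h0 : √(dcut ε 0) = 0 := by simp [dcut_zero]
  set m := cfcₙ (fun t => √(dcut ε t)) x with hm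
  have hs : star m = m := cf_star _ _
  have h1 : star (Q * m) * (Q * m) = fEps ε x := by
    have : star (Q * m) * (Q * m) = m * x * m := by
      rw [star_mul, hs]; simp only [x, mul_assoc]
    rw [this, hm, cfx' hcc h0 hx, cfm (by fun_prop) hcc (by simp [h0]) h0]
    refine cf_congr hx (fun t ht => ?_)
    have hd : 0 ≤ dcut ε t := by
      unfold dcut; exact div_nonneg (cutoff_nonneg _ _) (le_max_of_le_left ht)
    rw [mul_right_comm, Real.mul_self_sqrt hd, mul_comm, mul_dcut hε]
  refine ⟨m, h1, ?_⟩
  have h2 : ‖Q * m‖ * ‖Q * m‖ ≤ 1 := by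
    rw [← CStarRing.norm_star_mul_self, h1]; exact fEps_norm_le _ _
  nlinarith [norm_nonneg (Q * m)]

lemma d_mono (τ : QuasiTrace B) {x y : B} (hx : 0 ≤ x) (hy : 0 ≤ y) (h : x ∈ rcl y) :
    dTau τ x ≤ dTau τ y :=
  iSup_le (fun n => tau_le_d τ hy (fEps_nonneg _ _) (fEps_norm_le _ _)
    (rcl_trans (fEps_mem (one_div_pos' n) hx) h))

lemma d_star (τ : QuasiTrace B) {Q y : B} (hy : 0 ≤ y) (hQ : Q ∈ rcl y) :
    dTau τ (star Q * Q) ≤ dTau τ y := by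
  refine iSup_le (fun n => ?_)
  obtain ⟨m, hm, hm1⟩ := fEps_star_mul (one_div_pos' n) Q
  rw [← hm]
  exact tau_star_le_d τ hy hm1 (rcl_mul hQ m)

lemma d_swap (τ : QuasiTrace B) (P : B) : dTau τ (P * star P) ≤ dTau τ (star P * P) := by
  have := d_star τ (Q := star P) (star_mul_self_nonneg P)
    (by have := mem_rcl_mul_star (star P); rwa [star_star] at this)
  rwa [star_star] at this

lemma orth_norm {f g : B} (hf : 0 ≤ f) (hg : 0 ≤ g) (hf1 : ‖f‖ ≤ 1) (hg1 : ‖g‖ ≤ 1)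
    (h : f * g = 0) (h' : g * f = 0) : ‖f + g‖ ≤ 1 := by
  have e : (f + g) * (f + g) = f * f + g * g := by
    rw [mul_add, add_mul, add_mul, h, h']; abel
  have h1 : (f + g) * (f + g) ≤ f + g := by
    rw [e]; exact add_le_add (sq_le_self hf hf1) (sq_le_self hg hg1)
  have hfg : 0 ≤ f + g := add_nonneg hf hg
  have hs := star_pos hfg
  have h2 : 0 ≤ (f + g) * (f + g) := by have := star_mul_self_nonneg (f + g); rwa [hs] at this
  have h3 := CStarAlgebra.norm_le_norm_of_nonneg_of_le h2 h1
  have h4 : ‖(f + g) * (f + g)‖ = ‖f + g‖ * ‖f + g‖ := by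
    have := CStarRing.norm_star_mul_self (x := f + g); rwa [hs] at this
  rw [h4] at h3
  nlinarith [norm_nonneg (f + g)]

/-- every pair has orthogonal copies -/
def HasCopies (B : Type*) [NonUnitalCStarAlgebra B] : Prop :=
  ∀ p q : B, ∃ P Q : B, star P * P = star p * p ∧ star Q * Q = star q * q ∧ star P * Q = 0

lemma d_add (hB : HasCopies B) (τ : QuasiTrace B) {x y : B} (hx : 0 ≤ x) (hy : 0 ≤ y) :
    dTau τ (x + y) ≤ dTau τ x + dTau τ y := by
  obtain ⟨p, rfl⟩ := CStarAlgebra.nonneg_iff_eq_star_mul_self.1 hx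
  obtain ⟨q, rfl⟩ := CStarAlgebra.nonneg_iff_eq_star_mul_self.1 hy
  obtain ⟨P, Q, hP, hQ, hPQ⟩ := hB p q
  have hQP : star Q * P = 0 := by
    have := congrArg star hPQ; rwa [star_mul, star_star, star_zero] at this
  have e : star p * p + star q * q = star (P + Q) * (P + Q) := by
    rw [star_add, mul_add, add_mul, add_mul, hPQ, hQP, hP, hQ]; abel
  rw [e, ← hP, ← hQ]
  refine iSup_le (fun n => ?_)
  obtain ⟨m, hm, hm1⟩ := fEps_star_mul (one_div_pos' n) (P + Q)
  rw [← hm, τ.map_star_mul_self]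
  set Y := (P + Q) * m
  have hPP := mul_star_self_nonneg P
  have hQQ := mul_star_self_nonneg Q
  have hann : ∀ {ε ε' : ℝ}, 0 < ε → 0 < ε' → ∀ {P Q : B}, star P * Q = 0 →
      fEps ε (P * star P) * fEps ε' (Q * star Q) = 0 := by
    intro ε ε' hε hε' P Q hPQ
    rw [fEps_eq_mul' hε (mul_star_self_nonneg P), fEps_eq_mul hε' (mul_star_self_nonneg Q)]
    have : cfcₙ (dcut ε) (P * star P) * (P * star P) *
        (Q * star Q * cfcₙ (dcut ε') (Q * star Q)) =
      cfcₙ (dcut ε) (P * star P) * P * (star P * Q) * (star Q * cfcₙ (dcut ε') (Q * star Q)) := by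
      simp only [mul_assoc]
    rw [this, hPQ]; simp
  have hann2 : ∀ {ε : ℝ}, 0 < ε → ∀ {P Q : B}, star P * Q = 0 → fEps ε (P * star P) * Q = 0 := by
    intro ε hε P Q hPQ
    rw [fEps_eq_mul' hε (mul_star_self_nonneg P)]
    rw [mul_assoc, mul_assoc, hPQ]; simp
  have hd : ∀ n : ℕ, (0 : ℝ) < 1 / ((n : ℝ) + 1) / 2 := fun n => by
    have := one_div_pos' n; linarith
  refine tau_le_gen τ
    (u := fun n => fEps (1 / ((n : ℝ) + 1)) (P * star P) + fEps (1 / ((n : ℝ) + 1)) (Q * star Q))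
    (u' := fun n => fEps (1 / ((n : ℝ) + 1) / 2) (P * star P)
      + fEps (1 / ((n : ℝ) + 1) / 2) (Q * star Q))
    (fun n => add_nonneg (fEps_nonneg _ _) (fEps_nonneg _ _))
    (fun n => orth_norm (fEps_nonneg _ _) (fEps_nonneg _ _) (fEps_norm_le _ _) (fEps_norm_le _ _)
      (hann (hd n) (hd n) hPQ) (hann (hd n) (hd n) hQP))
    (fun n => orth_norm (fEps_nonneg _ _) (fEps_nonneg _ _) (fEps_norm_le _ _) (fEps_norm_le _ _)
      (hann (one_div_pos' n) (one_div_pos' n) hPQ) (hann (one_div_pos' n) (one_div_pos' n) hQP))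
    (fun n => by rw [star_add, fEps_star, fEps_star]) (fun n => ?_)
    (mul_star_self_nonneg Y) (norm_mul_star_le hm1) ?_ (fun n => ?_)
  · rw [mul_add, add_mul, add_mul, hann (hd n) (one_div_pos' n) hPQ,
      hann (hd n) (one_div_pos' n) hQP, fEps_mul (hd n) le_rfl, fEps_mul (hd n) le_rfl]
    abel
  · have h1 := approx_unit hPP (mem_rcl_mul_star P)
    have h2 := approx_unit hQQ (mem_rcl_mul_star Q)
    have h3 := (h1.add h2).mul_const (m * star Y)
    have e : Y * star Y = (P + Q) * (m * star Y) := by simp only [Y, mul_assoc]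
    rw [e]
    refine h3.congr (fun n => ?_)
    rw [← mul_assoc (_ + _) (P + Q)]
    congr 1
    rw [mul_add, add_mul, add_mul, hann2 (one_div_pos' n) hPQ, hann2 (one_div_pos' n) hQP]
    abel
  · rw [τ.map_add_of_commute _ _ (fEps_nonneg _ _) (fEps_nonneg _ _)
      (by rw [hann (hd n) (hd n) hPQ, hann (hd n) (hd n) hQP])]
    exact add_le_add ((le_dTau τ hPP (hd n)).trans (d_swap τ P))
      ((le_dTau τ hQQ (hd n)).trans (d_swap τ Q))

end P3

section P3b
set_option linter.unusedSectionVars false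
set_option linter.unusedVariables false
variable {C V : Type*} [NonUnitalCStarAlgebra C] [PartialOrder C] [StarOrderedRing C]
  [NonUnitalCStarAlgebra V] [PartialOrder V] [StarOrderedRing V]

/-- finite sums with row index transformed by `g` -/
def rowSum (SB : Stabilization C V) (g : ℕ → ℕ) : ((ℕ × ℕ) →₀ C) →ₗ[ℂ] V :=
  Finsupp.lsum ℂ (fun ij => SB.emb (g ij.1) ij.2)

lemma rowSum_inner (SB : Stabilization C V) {g : ℕ → ℕ} (hg : Function.Injective g)
    (F G : (ℕ × ℕ) →₀ C) :
    star (rowSum SB g F) * rowSum SB g G = star (rowSum SB id F) * rowSum SB id G := by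
  induction F using Finsupp.induction_linear with
  | zero => simp
  | add F F' h h' => simp only [_root_.map_add, star_add, add_mul, h, h']
  | single i x =>
    induction G using Finsupp.induction_linear with
    | zero => simp
    | add F F' h h' => simp only [_root_.map_add, mul_add, h, h']
    | single j y =>
      simp [rowSum, SB.emb_star, SB.emb_mul, hg.eq_iff]

lemma rowSum_orth (SB : Stabilization C V) {g g' : ℕ → ℕ} (hg : ∀ i j, g i ≠ g' j)
    (F G : (ℕ × ℕ) →₀ C) :
    star (rowSum SB g F) * rowSum SB g' G = 0 := by
  induction F using Finsupp.induction_linear with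
  | zero => simp
  | add F F' h h' => simp only [_root_.map_add, star_add, add_mul, h, h', add_zero]
  | single i x =>
    induction G using Finsupp.induction_linear with
    | zero => simp
    | add F F' h h' => simp only [_root_.map_add, mul_add, h, h', add_zero]
    | single j y =>
      simp [rowSum, SB.emb_star, SB.emb_mul, hg]

lemma rowSum_dense (SB : Stabilization C V) (p : V) :
    ∃ F : ℕ → ((ℕ × ℕ) →₀ C), Tendsto (fun n => rowSum SB id (F n)) atTop (𝓝 p) := by
  have h : p ∈ closure (Set.range (rowSum SB id)) := by
    have h2 : (Submodule.span ℂ {w : V | ∃ (i j : ℕ) (a : C), w = SB.emb i j a}) ≤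
        LinearMap.range (rowSum SB id) := by
      rw [Submodule.span_le]
      rintro _ ⟨i, j, a, rfl⟩
      exact ⟨Finsupp.single (i, j) a, by simp [rowSum]⟩
    exact closure_mono h2 (SB.dense_span p)
  obtain ⟨x, hx, hlim⟩ := mem_closure_iff_seq_limit.1 h
  choose F hF using hx
  exact ⟨F, by simpa [hF] using hlim⟩

lemma rowSum_copy (SB : Stabilization C V) {g : ℕ → ℕ} (hg : Function.Injective g)
    {p : V} {F : ℕ → ((ℕ × ℕ) →₀ C)}
    (hF : Tendsto (fun n => rowSum SB id (F n)) atTop (𝓝 p)) :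
    ∃ P : V, Tendsto (fun n => rowSum SB g (F n)) atTop (𝓝 P) ∧ star P * P = star p * p := by
  have hn : ∀ G, ‖rowSum SB g G‖ = ‖rowSum SB id G‖ := fun G => by
    have := rowSum_inner SB hg G G
    have h2 := congrArg norm this
    rw [CStarRing.norm_star_mul_self, CStarRing.norm_star_mul_self] at h2
    exact (mul_self_inj (norm_nonneg _) (norm_nonneg _)).1 h2
  have hc : CauchySeq (fun n => rowSum SB g (F n)) := by
    have hc0 := hF.cauchySeq
    rw [Metric.cauchySeq_iff] at hc0 ⊢
    intro ε hε
    obtain ⟨N, hN⟩ := hc0 ε hε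
    refine ⟨N, fun m hm n hn' => ?_⟩
    have := hN m hm n hn'
    rw [dist_eq_norm, ← map_sub] at this ⊢
    rwa [hn]
  obtain ⟨P, hP⟩ := cauchySeq_tendsto_of_complete hc
  refine ⟨P, hP, tendsto_nhds_unique (hP.star.mul hP) ?_⟩
  exact (hF.star.mul hF).congr (fun n => (rowSum_inner SB hg _ _).symm)

lemma hasCopies (SB : Stabilization C V) : HasCopies V := by
  intro p q
  obtain ⟨F, hF⟩ := rowSum_dense SB p
  obtain ⟨G, hG⟩ := rowSum_dense SB q
  obtain ⟨P, hP, hPP⟩ := rowSum_copy SB (g := fun i => 2 * i) (fun i j h => by simpa using h) hF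
  obtain ⟨Q, hQ, hQQ⟩ := rowSum_copy SB (g := fun i => 2 * i + 1) (fun i j h => by simpa using h) hG
  refine ⟨P, Q, hPP, hQQ, tendsto_nhds_unique (hP.star.mul hQ) ?_⟩
  refine tendsto_const_nhds.congr (fun n => (rowSum_orth SB (fun i j => by omega) _ _).symm)

end P3b

section P4
set_option linter.unusedSectionVars false
set_option linter.unusedVariables false
variable {B : Type*} [NonUnitalCStarAlgebra B] [PartialOrder B] [StarOrderedRing B]

/-- diagonal embedding -/
def diagHom (B : Type*) [NonUnitalCStarAlgebra B] : (B × B) →⋆ₙₐ[ℂ] CStarMatrix (Fin 2) (Fin 2) B where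
  toFun p := CStarMatrix.ofMatrix !![p.1, 0; 0, p.2]
  map_smul' r p := by
    ext i j; fin_cases i <;> fin_cases j <;> simp [CStarMatrix.ofMatrix_apply]
  map_zero' := by
    ext i j; fin_cases i <;> fin_cases j <;> simp [CStarMatrix.ofMatrix_apply]
  map_add' p q := by
    ext i j; fin_cases i <;> fin_cases j <;> simp [CStarMatrix.ofMatrix_apply]
  map_mul' p q := by
    ext i j; fin_cases i <;> fin_cases j <;> simp [CStarMatrix.ofMatrix_apply, CStarMatrix.mul_apply]
  map_star' p := by
    ext i j; fin_cases i <;> fin_cases j <;> simp [CStarMatrix.ofMatrix_apply, CStarMatrix.star_apply]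

lemma hom_cfc {D : Type*} [NonUnitalCStarAlgebra D] (φ : (B × B) →⋆ₙₐ[ℂ] D)
    {f : ℝ → ℝ} (hf : Continuous f) (hf0 : f 0 = 0) {a b : B}
    (ha : IsSelfAdjoint a) (hb : IsSelfAdjoint b) :
    cfcₙ f (φ (a, b)) = φ (cfcₙ f a, cfcₙ f b) := by
  have hab : IsSelfAdjoint ((a, b) : B × B) := by
    rw [IsSelfAdjoint, Prod.star_def]; simp [ha.star_eq, hb.star_eq]
  have hcon : Continuous φ :=
    (NonUnitalStarAlgHom.instContinuousLinearMapClassComplex (F := (B × B) →⋆ₙₐ[ℂ] D)).map_continuous φ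
  have h1 := NonUnitalStarAlgHom.map_cfcₙ (R := ℝ) (S := ℂ) φ f (a, b)
    hf.continuousOn hf0 hcon hab (hab.map _)
  rw [← h1, cfcₙ_map_prod (S := ℂ) f a b hf.continuousOn hab ha hb]

lemma hom_comm {D : Type*} [NonUnitalCStarAlgebra D] (φ : (B × B) →⋆ₙₐ[ℂ] D) {X : D}
    {f : ℝ → ℝ} (hf : Continuous f) (hf0 : f 0 = 0) {a b : B}
    (ha : IsSelfAdjoint a) (hb : IsSelfAdjoint b) (h : Commute (φ (a, b)) X) :
    Commute (φ (cfcₙ f a, cfcₙ f b)) X := by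
  rw [← hom_cfc φ hf hf0 ha hb]; exact h.cfcₙ_real f

lemma intertwine {f : ℝ → ℝ} (hf : Continuous f) (hf0 : f 0 = 0) (x : B) :
    x * cfcₙ f (star x * x) = cfcₙ f (x * star x) * x := by
  set X : CStarMatrix (Fin 2) (Fin 2) B := CStarMatrix.ofMatrix !![0, 0; x, 0] with hX
  have h1 : Commute (diagHom B (star x * x, x * star x)) X := by
    rw [Commute, SemiconjBy]
    ext i j; fin_cases i <;> fin_cases j <;>
      simp [hX, diagHom, CStarMatrix.ofMatrix_apply, CStarMatrix.mul_apply, mul_assoc]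
  have h2 := hom_comm (diagHom B) hf hf0 (IsSelfAdjoint.star_mul_self x)
    (IsSelfAdjoint.mul_star_self x) h1
  have h3 := congrFun (congrFun h2.eq 1) 0
  have e1 : (diagHom B (cfcₙ f (star x * x), cfcₙ f (x * star x)) * X) 1 0 =
      cfcₙ f (x * star x) * x := by
    simp [hX, diagHom, CStarMatrix.ofMatrix_apply, CStarMatrix.mul_apply]
  have e2 : (X * diagHom B (cfcₙ f (star x * x), cfcₙ f (x * star x))) 1 0 =
      x * cfcₙ f (star x * x) := by
    simp [hX, diagHom, CStarMatrix.ofMatrix_apply, CStarMatrix.mul_apply]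
  rw [← e1, ← e2]; exact h3.symm

/-- shifted positive part -/
def gE (ε : ℝ) (x : B) : B := cfcₙ (fun t : ℝ => max 0 (t - ε)) x

lemma gE_cont (ε : ℝ) : Continuous (fun t : ℝ => max 0 (t - ε)) := by fun_prop
lemma gE_z {ε : ℝ} (hε : 0 ≤ ε) : max 0 ((0 : ℝ) - ε) = 0 := by simpa using hε

lemma gE_nonneg (ε : ℝ) (x : B) : 0 ≤ gE ε x := cfcₙ_nonneg (fun t _ => le_max_left _ _)

lemma gE_star_mul {ε : ℝ} (hε : 0 < ε) (x : B) :
    ∃ Y : B, star Y * Y = gE ε (star x * x) ∧ Y * star Y = gE ε (x * star x) := by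
  set a := star x * x
  have ha : 0 ≤ a := star_mul_self_nonneg x
  have hpos : ∀ t : ℝ, 0 < max t ε := fun t => lt_max_of_lt_right hε
  have hlc : Continuous (fun t : ℝ => max 0 (t - ε) / max t ε) :=
    Continuous.div (by fun_prop) (by fun_prop) (fun t => (hpos t).ne')
  have hl0 : max 0 ((0 : ℝ) - ε) / max 0 ε = 0 := by rw [gE_z hε.le]; simp
  have hkc : Continuous (fun t : ℝ => √(max 0 (t - ε) / max t ε)) := hlc.sqrt
  have hk0 : √(max 0 ((0 : ℝ) - ε) / max 0 ε) = 0 := by rw [hl0]; simp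
  have hl : ∀ t : ℝ, 0 ≤ max 0 (t - ε) / max t ε := fun t =>
    div_nonneg (le_max_left _ _) (hpos t).le
  have htl : ∀ t : ℝ, t * (max 0 (t - ε) / max t ε) = max 0 (t - ε) := fun t => by
    rcases le_total t ε with h | h
    · rw [max_eq_left (by linarith : t - ε ≤ 0)]; simp
    · rw [max_eq_left h]; field_simp [(lt_of_lt_of_le hε h).ne']
  set k := cfcₙ (fun t : ℝ => √(max 0 (t - ε) / max t ε)) a with hk
  have hks : star k = k := cf_star _ _
  have hkk : k * k = cfcₙ (fun t : ℝ => max 0 (t - ε) / max t ε) a := by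
    rw [hk, cfm hkc hkc hk0 hk0]; congr 1; funext t; rw [Real.mul_self_sqrt (hl t)]
  refine ⟨x * k, ?_, ?_⟩
  · have : star (x * k) * (x * k) = k * a * k := by
      rw [star_mul, hks]; simp only [a, mul_assoc]
    rw [this, hk, cfx' hkc hk0 ha, cfm (by fun_prop) hkc (by simp) hk0]
    unfold gE; congr 1; funext t
    rw [mul_right_comm, Real.mul_self_sqrt (hl t), mul_comm, htl]
  · have : x * k * star (x * k) = x * (k * k) * star x := by
      rw [star_mul, hks]; simp only [mul_assoc]
    rw [this, hkk, intertwine hlc hl0 x, mul_assoc, cfx' hlc hl0 (mul_star_self_nonneg x)]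
    unfold gE; congr 1; funext t
    rw [mul_comm, htl]

/-- real functions on the joint spectrum -/
def jc (n : B) (f : ℂ → ℝ) : B := cfcₙ (fun z : ℂ => (f z : ℂ)) n

lemma jc_cont {f : ℂ → ℝ} (hf : Continuous f) : Continuous (fun z : ℂ => (f z : ℂ)) := by fun_prop

lemma jc_sub {f g : ℂ → ℝ} (hf : Continuous f) (hg : Continuous g) (hf0 : f 0 = 0) (hg0 : g 0 = 0)
    (n : B) : jc n f - jc n g = jc n (fun z => f z - g z) := by
  unfold jc
  rw [← cfcₙ_sub _ _ n (jc_cont hf).continuousOn (by simp [hf0]) (jc_cont hg).continuousOn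
    (by simp [hg0])]
  simp

lemma jc_add {f g : ℂ → ℝ} (hf : Continuous f) (hg : Continuous g) (hf0 : f 0 = 0) (hg0 : g 0 = 0)
    (n : B) : jc n f + jc n g = jc n (fun z => f z + g z) := by
  unfold jc
  rw [← cfcₙ_add _ _ n (jc_cont hf).continuousOn (by simp [hf0]) (jc_cont hg).continuousOn
    (by simp [hg0])]
  simp

open ComplexOrder in
lemma jc_nonneg {f : ℂ → ℝ} (hf : ∀ z, 0 ≤ f z) (n : B) : 0 ≤ jc n f :=
  cfcₙ_nonneg (fun z _ => by exact_mod_cast hf z)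

lemma jc_mono {f g : ℂ → ℝ} (hf : Continuous f) (hg : Continuous g) (hf0 : f 0 = 0) (hg0 : g 0 = 0)
    (h : ∀ z, f z ≤ g z) (n : B) : jc n f ≤ jc n g := by
  rw [← sub_nonneg, jc_sub hg hf hg0 hf0]
  exact jc_nonneg (fun z => sub_nonneg.2 (h z)) n

lemma jc_comm {f g : ℂ → ℝ} (n : B) : jc n f * jc n g = jc n g * jc n f :=
  (cfcₙ_commute_cfcₙ _ _ n).eq

lemma jc_comp {f : ℂ → ℝ} {h : ℝ → ℝ} (hf : Continuous f) (hh : Continuous h) (hf0 : f 0 = 0)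
    (hh0 : h 0 = 0) (hfn : ∀ z, 0 ≤ f z) {n : B} (hn : IsStarNormal n) :
    cfcₙ h (jc n f) = jc n (fun z => h (f z)) := by
  have hsa : IsSelfAdjoint (jc n f) := IsSelfAdjoint.of_nonneg (jc_nonneg hfn n)
  rw [cfcₙ_real_eq_complex h hsa]
  unfold jc
  rw [← cfcₙ_comp (fun z : ℂ => ((h z.re : ℝ) : ℂ)) (fun z : ℂ => (f z : ℂ)) n (by fun_prop)
    (by simp [hh0]) (by fun_prop) (by simp [hf0]) hn]
  congr 1

lemma jc_exists {x y : B} (hx : 0 ≤ x) (hy : 0 ≤ y) (hc : x * y = y * x) :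
    ∃ n : B, IsStarNormal n ∧ jc n (fun z => max 0 z.re) = x ∧ jc n (fun z => max 0 z.im) = y := by
  have hxs : IsSelfAdjoint x := .of_nonneg hx
  have hys : IsSelfAdjoint y := .of_nonneg hy
  set n := x + Complex.I • y with hn
  have hst : star n = x - Complex.I • y := by
    rw [hn, star_add, star_smul, hxs.star_eq, hys.star_eq]; simp [sub_eq_add_neg]
  have hnn : IsStarNormal n := ⟨by
    rw [Commute, SemiconjBy, hst, hn]
    simp only [mul_add, add_mul, sub_mul, mul_sub, smul_mul_assoc, mul_smul_comm, hc, smul_add, smul_sub]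
    abel⟩
  have hre : ((realPart n : selfAdjoint B) : B) = x := by
    rw [realPart_apply_coe, hst, hn, show x + Complex.I • y + (x - Complex.I • y) = x + x by abel,
      ← two_smul ℝ x, smul_smul]; norm_num
  have him : ((imaginaryPart n : selfAdjoint B) : B) = y := by
    rw [imaginaryPart_apply_coe, hst, hn,
      show x + Complex.I • y - (x - Complex.I • y) = Complex.I • (y + y) by rw [smul_add]; abel,
      ← two_smul ℝ y, smul_comm Complex.I (2:ℝ) y, smul_smul, ← smul_comm, smul_smul]
    norm_num
  have hpos : ∀ {a : B}, 0 ≤ a → cfcₙ (fun t : ℝ => max 0 t) a = a := by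
    intro a ha
    conv_rhs => rw [← cfcₙ_id' ℝ a (ha := .of_nonneg ha)]
    exact cf_congr ha (fun t ht => max_eq_right ht)
  refine ⟨n, hnn, ?_, ?_⟩
  · have := cfcₙ_comp_re (fun t : ℝ => max 0 t) n (by fun_prop) (by simp) hnn
    rw [hre, hpos hx] at this
    exact this
  · have := cfcₙ_comp_im (fun t : ℝ => max 0 t) n (by fun_prop) (by simp) hnn
    rw [him, hpos hy] at this
    exact this

lemma gE_joint {x y : B} (hx : 0 ≤ x) (hy : 0 ≤ y) (hc : x * y = y * x) {ε : ℝ} (hε : 0 < ε) :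
    (gE ε (x + y) ≤ gE (ε / 2) x + gE (ε / 2) y ∧
      gE ε (x + y) * (gE (ε / 2) x + gE (ε / 2) y) =
        (gE (ε / 2) x + gE (ε / 2) y) * gE ε (x + y)) ∧
    (gE ε x + gE ε y ≤ gE ε (x + y) ∧
      (gE ε x + gE ε y) * gE ε (x + y) = gE ε (x + y) * (gE ε x + gE ε y)) ∧
    (∀ δ, 0 < δ → gE δ x * gE δ y = gE δ y * gE δ x) := by
  obtain ⟨n, hn, h1, h2⟩ := jc_exists hx hy hc
  have hr : Continuous (fun z : ℂ => max 0 z.re) := by fun_prop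
  have hi : Continuous (fun z : ℂ => max 0 z.im) := by fun_prop
  have h3 : x + y = jc n (fun z => max 0 z.re + max 0 z.im) := by
    rw [← jc_add hr hi (by simp) (by simp), h1, h2]
  have gx : ∀ {δ : ℝ}, 0 < δ → gE δ x = jc n (fun z => max 0 (max 0 z.re - δ)) := by
    intro δ hδ
    rw [← h1]; exact jc_comp hr (gE_cont δ) (by simp) (gE_z hδ.le) (fun z => le_max_left _ _) hn
  have gy : ∀ {δ : ℝ}, 0 < δ → gE δ y = jc n (fun z => max 0 (max 0 z.im - δ)) := by
    intro δ hδ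
    rw [← h2]; exact jc_comp hi (gE_cont δ) (by simp) (gE_z hδ.le) (fun z => le_max_left _ _) hn
  have gxy : gE ε (x + y) = jc n (fun z => max 0 (max 0 z.re + max 0 z.im - ε)) := by
    rw [h3]; exact jc_comp (hr.add hi) (gE_cont ε) (by simp) (gE_z hε.le)
      (fun z => add_nonneg (le_max_left _ _) (le_max_left _ _)) hn
  have gs : ∀ {δ : ℝ}, 0 < δ → gE δ x + gE δ y =
      jc n (fun z => max 0 (max 0 z.re - δ) + max 0 (max 0 z.im - δ)) := by
    intro δ hδ
    rw [gx hδ, gy hδ, jc_add (by fun_prop) (by fun_prop) (by simpa using hδ.le)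
      (by simpa using hδ.le)]
  have hε2 : 0 < ε / 2 := by linarith
  refine ⟨⟨?_, ?_⟩, ⟨?_, ?_⟩, fun δ hδ => ?_⟩
  · rw [gxy, gs hε2]
    refine jc_mono (by fun_prop) (by fun_prop) (by simpa using hε.le)
      (by simp; linarith) (fun z => ?_) n
    generalize max 0 z.re = s
    generalize max 0 z.im = t
    rcases max_cases 0 (s - ε / 2) with h | h <;> rcases max_cases 0 (t - ε / 2) with h' | h' <;>
      exact max_le (by linarith) (by linarith)
  · rw [gxy, gs hε2]; exact jc_comm n
  · rw [gxy, gs hε]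
    refine jc_mono (by fun_prop) (by fun_prop) (by simpa using hε.le)
      (by simpa using hε.le) (fun z => ?_) n
    have hs : 0 ≤ max 0 z.re := le_max_left _ _
    have ht : 0 ≤ max 0 z.im := le_max_left _ _
    generalize max 0 z.re = s at *
    generalize max 0 z.im = t at *
    rcases max_cases 0 (s - ε) with h | h <;> rcases max_cases 0 (t - ε) with h' | h' <;>
      rcases max_cases 0 (s + t - ε) with h'' | h'' <;> linarith
  · rw [gxy, gs hε]; exact jc_comm n
  · rw [gx hδ, gy hδ]; exact jc_comm n

lemma gE_smul {r : ℝ} (hr : 0 < r) {ε : ℝ} (hε : 0 < ε) {x : B} (hx : 0 ≤ x) :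
    gE ε (r • x) = r • gE (ε / r) x := by
  unfold gE
  rw [← cfcₙ_comp_smul r (fun t : ℝ => max 0 (t - ε)) x (by fun_prop) (gE_z hε.le)
    (.of_nonneg hx), ← cfcₙ_smul r _ x (by fun_prop) (gE_z (by positivity))]
  congr 1; funext t
  simp only [smul_eq_mul]
  rw [mul_max_of_nonneg _ _ hr.le]
  congr 1
  · simp
  · field_simp

lemma gE_anti {ε ε' : ℝ} (hε' : 0 ≤ ε') (h : ε' ≤ ε) {x : B} (hx : 0 ≤ x) : gE ε x ≤ gE ε' x :=
  cf_mono (gE_cont _) (gE_cont _) (gE_z (hε'.trans h)) (gE_z hε') hx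
    (fun t _ => max_le_max le_rfl (by linarith))

lemma gE_zero {x : B} (hx : 0 ≤ x) : gE 0 x = x := by
  unfold gE
  conv_rhs => rw [← cfcₙ_id' ℝ x (ha := .of_nonneg hx)]
  exact cf_congr hx (fun t ht => by simpa using ht)

lemma gE_sub_norm {ε : ℝ} (hε : 0 ≤ ε) {x : B} (hx : 0 ≤ x) : ‖x - gE ε x‖ ≤ ε := by
  have : x - gE ε x = cfcₙ (fun t : ℝ => t - max 0 (t - ε)) x := by
    rw [← cfs continuous_id' (gE_cont _) rfl (gE_z hε), cfcₙ_id' ℝ x (ha := .of_nonneg hx)]; rfl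
  rw [this]
  refine cf_norm hx hε (fun t ht => ?_)
  rcases max_cases 0 (t - ε) with h | h <;> rw [abs_le] <;> constructor <;> linarith

lemma gE_eq_zero {ε : ℝ} {x : B} (hx : 0 ≤ x) (h : ‖x‖ ≤ ε) : gE ε x = 0 := by
  have hε : 0 ≤ ε := (norm_nonneg x).trans h
  unfold gE
  have : cfcₙ (fun t : ℝ => max 0 (t - ε)) x = cfcₙ (fun _ : ℝ => 0) x := by
    refine cfcₙ_congr (fun t ht => ?_)
    have h1 : ‖t‖ ≤ ‖x‖ := NonUnitalIsometricContinuousFunctionalCalculus.norm_quasispectrum_le x ht (.of_nonneg hx)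
    have := (le_abs_self t).trans h1
    simp only [max_eq_left_iff]; linarith
  rw [this]; exact cfcₙ_const_zero ℝ x
end P4

section P5
set_option linter.unusedSectionVars false
set_option linter.unusedVariables false
variable {B : Type*} [NonUnitalCStarAlgebra B] [PartialOrder B] [StarOrderedRing B]

/-- slice function -/
def slice (c δ : ℝ) : ℝ → ℝ := fun t => max 0 (t - c) - max 0 (t - (c + δ))

lemma slice_cont (c δ : ℝ) : Continuous (slice c δ) := by unfold slice; fun_prop

lemma slice_zero {c δ : ℝ} (hc : 0 ≤ c) (hδ : 0 < δ) : slice c δ 0 = 0 := by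
  unfold slice; rw [gE_z hc, gE_z (by linarith)]; simp

lemma slice_nonneg {c δ : ℝ} (hδ : 0 < δ) (t : ℝ) : 0 ≤ slice c δ t := by
  unfold slice; exact sub_nonneg.2 (max_le_max le_rfl (by linarith))

lemma slice_le {c δ : ℝ} (hδ : 0 < δ) (t : ℝ) : slice c δ t ≤ δ := by
  unfold slice
  rcases max_cases 0 (t - c) with h | h <;> rcases max_cases 0 (t - (c + δ)) with h' | h' <;>
    linarith

lemma slice_sup {c δ : ℝ} (hδ : 0 < δ) {t : ℝ} (h : t ≤ c) : slice c δ t = 0 := by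
  unfold slice; rw [max_eq_left (by linarith), max_eq_left (by linarith)]; simp

lemma slice_top {c δ : ℝ} (hδ : 0 < δ) {t : ℝ} (h : c + δ ≤ t) : slice c δ t = δ := by
  unfold slice; rw [max_eq_right (by linarith), max_eq_right (by linarith)]; ring

lemma tau_slice (τ : QuasiTrace B) {x y : B} (hx : 0 ≤ x) (hy : 0 ≤ y) {δ c : ℝ} (hδ : 0 < δ)
    (hc : 0 ≤ c) (hxy : ‖x - y‖ ≤ δ) :
    τ.toFun (cfcₙ (slice (c + 3 * δ) δ) x) ≤ τ.toFun (cfcₙ (slice c δ) y) := by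
  have hsc := slice_cont (c + 3 * δ) δ
  have hs0 : slice (c + 3 * δ) δ 0 = 0 := slice_zero (by linarith) hδ
  have hsc' := slice_cont c δ
  have hs0' : slice c δ 0 = 0 := slice_zero hc hδ
  set p := cfcₙ (slice (c + 3 * δ) δ) x with hp
  have hp0 : 0 ≤ p := cf_nonneg hx (fun t _ => slice_nonneg hδ t)
  have hps : star p = p := star_pos hp0
  have hpp : 0 ≤ p * p := by have := star_mul_self_nonneg p; rwa [hps] at this
  set y' := gE (c + δ) y with hy'
  have hy'0 : 0 ≤ y' := gE_nonneg _ _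
  have h1 : (c + 3 * δ) • (p * p) ≤ p * x * p := by
    rw [hp, cfx' hsc hs0 hx, cfm hsc hsc hs0 hs0, cfm (by fun_prop) hsc (by simp) hs0,
      ← cfcₙ_smul (c + 3 * δ) _ x (by fun_prop) (by simp [hs0])]
    refine cf_mono (by fun_prop) (by fun_prop) (by simp [hs0]) (by simp) hx (fun t ht => ?_)
    rw [smul_eq_mul]
    rcases le_total t (c + 3 * δ) with h | h
    · rw [slice_sup hδ h]; simp
    · nlinarith [mul_nonneg (slice_nonneg (c := c + 3 * δ) hδ t) (slice_nonneg (c := c + 3 * δ) hδ t)]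
  have h2 : p * (x - y) * p ≤ δ • (p * p) :=
    (conj_norm_le ((IsSelfAdjoint.of_nonneg hx).sub (.of_nonneg hy)) p hps).trans
      (smul_le_smul_of_nonneg_right hxy hpp)
  have h3 : p * (y - y') * p ≤ (c + δ) • (p * p) :=
    (conj_norm_le ((IsSelfAdjoint.of_nonneg hy).sub (.of_nonneg hy'0)) p hps).trans
      (smul_le_smul_of_nonneg_right (gE_sub_norm (by linarith) hy) hpp)
  have h4 : δ • (p * p) ≤ p * y' * p := by
    have e : p * y' * p = p * x * p - p * (x - y) * p - p * (y - y') * p := by noncomm_ring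
    have e2 : δ • (p * p) = (c + 3 * δ) • (p * p) - δ • (p * p) - (c + δ) • (p * p) := by
      rw [← sub_smul, ← sub_smul]; congr 1; ring
    rw [e, e2]
    exact sub_le_sub (sub_le_sub h1 h2) h3
  set Q := CFC.sqrt y' * p with hQ
  have hQQ : star Q * Q = p * y' * p := by
    rw [hQ, star_mul, hps, star_pos (CFC.sqrt_nonneg y'), mul_assoc, ← mul_assoc (CFC.sqrt y'),
      CFC.sqrt_mul_sqrt_self y' hy'0, mul_assoc]
  have h5 : p ∈ rcl (star Q * Q) := by
    refine mem_rcl_of_le (star_mul_self_nonneg Q) (r := δ⁻¹) ?_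
    rw [hps, hQQ]
    have := smul_le_smul_of_nonneg_left h4 (inv_nonneg.2 hδ.le)
    rwa [smul_smul, inv_mul_cancel₀ hδ.ne', one_smul] at this
  have hδi : 0 < δ⁻¹ := inv_pos.2 hδ
  set w := cfcₙ (slice c δ) y with hw
  have hw0 : 0 ≤ w := cf_nonneg hy (fun t _ => slice_nonneg hδ t)
  have hnorm : ∀ {c : ℝ} {x : B}, 0 ≤ x → ‖δ⁻¹ • cfcₙ (slice c δ) x‖ ≤ 1 := by
    intro c x hx
    rw [norm_smul, Real.norm_of_nonneg hδi.le]
    have : ‖cfcₙ (slice c δ) x‖ ≤ δ := cf_norm hx hδ.le (fun t _ => by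
      rw [abs_of_nonneg (slice_nonneg hδ t)]; exact slice_le hδ t)
    calc δ⁻¹ * _ ≤ δ⁻¹ * δ := by gcongr
      _ = 1 := inv_mul_cancel₀ hδ.ne'
  have h6 : (δ⁻¹ • w) * y' = y' := by
    rw [hw, hy', gE, smul_mul_assoc, cfm hsc' (gE_cont _) hs0' (gE_z (by linarith)),
      ← cfcₙ_smul δ⁻¹ _ y (by fun_prop) (by simp [hs0'])]
    refine cf_congr hy (fun t ht => ?_)
    rw [smul_eq_mul]
    rcases le_total t (c + δ) with h | h
    · rw [max_eq_left (by linarith)]; simp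
    · rw [slice_top hδ h, ← mul_assoc, inv_mul_cancel₀ hδ.ne', one_mul]
  have h7 : τ.toFun (δ⁻¹ • p) ≤ τ.toFun (δ⁻¹ • w) := by
    refine (tau_le_d τ (star_mul_self_nonneg Q) (smul_nonneg hδi.le hp0) (hnorm hx)
      (rcl_smul h5 _)).trans (iSup_le (fun n => ?_))
    obtain ⟨m, hm, hm1⟩ := fEps_star_mul (one_div_pos' n) Q
    rw [← hm, τ.map_star_mul_self]
    refine τ.pq.L2 (smul_nonneg hδi.le hw0) (hnorm hy) (mul_star_self_nonneg _)
      (norm_mul_star_le hm1) ?_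
    rw [← mul_assoc, ← mul_assoc]
    congr 2
    rw [hQ, ← mul_assoc, rcl_unit (sqrt_mem_rcl hy'0) h6]
  rw [τ.map_smul _ _ hδi hp0, τ.map_smul _ _ hδi hw0] at h7
  exact (ENNReal.mul_le_mul_iff_right (by simpa using hδ) ENNReal.ofReal_ne_top).1 h7

lemma gE_split (τ : QuasiTrace B) {x : B} (hx : 0 ≤ x) {δ c : ℝ} (hδ : 0 < δ) (hc : 0 ≤ c) :
    τ.toFun (gE c x) = τ.toFun (cfcₙ (slice c δ) x) + τ.toFun (gE (c + δ) x) := by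
  rw [← τ.map_add_of_commute _ _ (cf_nonneg hx (fun t _ => slice_nonneg hδ t)) (gE_nonneg _ _)
    (cf_comm x)]
  congr 1
  unfold gE
  rw [cfa (slice_cont c δ) (gE_cont _) (slice_zero hc hδ) (gE_z (by linarith))]
  congr 1; funext t; unfold slice; ring

lemma lsc_mono (τ : QuasiTrace B) {x y : B} (hx : 0 ≤ x) (hy : 0 ≤ y) {δ : ℝ} (hδ : 0 < δ)
    (hxy : ‖x - y‖ ≤ δ) : τ.toFun (gE (3 * δ) x) ≤ τ.toFun y := by
  obtain ⟨M, hM⟩ := exists_nat_ge (‖x‖ / δ)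
  rw [div_le_iff₀ hδ] at hM
  have key : ∀ j : ℕ, ∀ k : ℕ, M ≤ k + j →
      τ.toFun (gE (k * δ + 3 * δ) x) ≤ τ.toFun (gE (k * δ) y) := by
    intro j
    induction j with
    | zero =>
      intro k hk
      have hk' : (M : ℝ) ≤ k := by exact_mod_cast hk
      rw [gE_eq_zero hx, τ.map_zero]
      · exact zero_le
      · nlinarith
    | succ j ih =>
      intro k hk
      have hkδ : 0 ≤ (k : ℝ) * δ := by positivity
      rw [gE_split τ hx hδ (by positivity), gE_split τ hy hδ hkδ]
      refine add_le_add (tau_slice τ hx hy hδ hkδ hxy) ?_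
      have := ih (k + 1) (by omega)
      push_cast at this
      have e1 : ((k : ℝ) + 1) * δ + 3 * δ = k * δ + 3 * δ + δ := by ring
      have e2 : ((k : ℝ) + 1) * δ = k * δ + δ := by ring
      rw [e1, e2] at this
      exact this
  have := key M 0 (by omega)
  simpa [gE_zero hy] using this

open Classical in
/-- regularization -/
def reg (t : B → ℝ≥0∞) (x : B) : ℝ≥0∞ :=
  if 0 ≤ x then ⨆ (ε : ℝ) (_ : 0 < ε), t (gE ε x) else 0

lemma reg_pos {t : B → ℝ≥0∞} {x : B} (hx : 0 ≤ x) :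
    reg t x = ⨆ (ε : ℝ) (_ : 0 < ε), t (gE ε x) := if_pos hx

lemma le_reg {t : B → ℝ≥0∞} {x : B} (hx : 0 ≤ x) {ε : ℝ} (hε : 0 < ε) : t (gE ε x) ≤ reg t x := by
  rw [reg_pos hx]; exact le_iSup₂ (f := fun (ε : ℝ) (_ : 0 < ε) => t (gE ε x)) ε hε

lemma reg_le {t : B → ℝ≥0∞} {x : B} (hx : 0 ≤ x) {M : ℝ≥0∞} (h : ∀ ε, 0 < ε → t (gE ε x) ≤ M) :
    reg t x ≤ M := by
  rw [reg_pos hx]; exact iSup₂_le h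

lemma PQ.gE_anti {t : B → ℝ≥0∞} (ht : PQ t) {x : B} (hx : 0 ≤ x) {ε ε' : ℝ} (hε' : 0 ≤ ε')
    (h : ε' ≤ ε) : t (gE ε x) ≤ t (gE ε' x) :=
  ht.mono (gE_nonneg _ _) (Paper.gE_anti hε' h hx) (cf_comm x)

lemma PQ.reg_le_self {t : B → ℝ≥0∞} (ht : PQ t) {x : B} (hx : 0 ≤ x) : reg t x ≤ t x :=
  reg_le hx (fun ε hε => by
    have := ht.gE_anti hx le_rfl hε.le; rwa [gE_zero hx] at this)

lemma PQ.reg_smul_le {t : B → ℝ≥0∞} (ht : PQ t) {r : ℝ} (hr : 0 < r) {x : B} (hx : 0 ≤ x) :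
    reg t (r • x) ≤ ENNReal.ofReal r * reg t x := by
  refine reg_le (smul_nonneg hr.le hx) (fun ε hε => ?_)
  rw [gE_smul hr hε hx, ht.smul r _ hr (gE_nonneg _ _)]
  gcongr
  exact le_reg hx (by positivity)

lemma PQ.reg {t : B → ℝ≥0∞} (ht : PQ t) : PQ (reg t) where
  zero := by
    refine le_antisymm (reg_le le_rfl (fun ε hε => ?_)) zero_le
    rw [gE_eq_zero le_rfl (by simpa using hε.le), ht.zero]
  smul r x hr hx := by
    refine le_antisymm (ht.reg_smul_le hr hx) ?_
    have h1 := ht.reg_smul_le (inv_pos.2 hr) (smul_nonneg hr.le hx)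
    rw [smul_smul, inv_mul_cancel₀ hr.ne', one_smul] at h1
    calc ENNReal.ofReal r * Paper.reg t x
        ≤ ENNReal.ofReal r * (ENNReal.ofReal r⁻¹ * Paper.reg t (r • x)) := by gcongr
      _ = Paper.reg t (r • x) := by
        rw [← mul_assoc, ← ENNReal.ofReal_mul hr.le, mul_inv_cancel₀ hr.ne']; simp
  add x y hx hy hc := by
    have hxy := add_nonneg hx hy
    refine le_antisymm (reg_le hxy (fun ε hε => ?_)) ?_
    · obtain ⟨⟨h1, h2⟩, -, h3⟩ := gE_joint hx hy hc hε
      have hε2 : 0 < ε / 2 := by linarith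
      refine (ht.mono (gE_nonneg _ _) h1 h2).trans ?_
      rw [ht.add _ _ (gE_nonneg _ _) (gE_nonneg _ _) (h3 _ hε2)]
      exact add_le_add (le_reg hx hε2) (le_reg hy hε2)
    · rw [reg_pos hx, reg_pos hy]
      simp only [iSup_subtype']
      refine ENNReal.iSup_add_iSup_le (fun ε δ => ?_)
      have hμ : 0 < min ε.1 δ.1 := lt_min ε.2 δ.2
      obtain ⟨-, ⟨h1, h2⟩, h3⟩ := gE_joint hx hy hc hμ
      refine (add_le_add (ht.gE_anti hx hμ.le (min_le_left _ _))
        (ht.gE_anti hy hμ.le (min_le_right _ _))).trans ?_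
      rw [← ht.add _ _ (gE_nonneg _ _) (gE_nonneg _ _) (h3 _ hμ)]
      exact (ht.mono (add_nonneg (gE_nonneg _ _) (gE_nonneg _ _)) h1 h2).trans (le_reg hxy hμ)
  trace x := by
    rw [reg_pos (star_mul_self_nonneg x), reg_pos (mul_star_self_nonneg x)]
    refine iSup_congr (fun ε => iSup_congr (fun hε => ?_))
    obtain ⟨Y, h1, h2⟩ := gE_star_mul hε x
    rw [← h1, ← h2, ht.trace]

lemma reg_lsc {t : B → ℝ≥0∞} (ht : ∀ x y : B, 0 ≤ x → 0 ≤ y → ∀ δ : ℝ, 0 < δ → ‖x - y‖ ≤ δ →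
    t (gE (3 * δ) x) ≤ t y) : LowerSemicontinuousOn (reg t) {a : B | 0 ≤ a} := by
  intro x hx M hM
  have hx' : 0 ≤ x := hx
  rw [reg_pos hx'] at hM
  obtain ⟨ε, hε⟩ := lt_iSup_iff.1 hM
  obtain ⟨hε0, hlt⟩ := lt_iSup_iff.1 hε
  set δ := ε / 6
  have hδ : 0 < δ := by positivity
  filter_upwards [self_mem_nhdsWithin, mem_nhdsWithin_of_mem_nhds (Metric.ball_mem_nhds x hδ)]
    with y hy hyb
  have hy' : 0 ≤ y := hy
  refine hlt.trans_le ((le_trans ?_ (le_reg hy' hδ)))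
  have h1 : ‖x - gE δ y‖ ≤ 2 * δ := by
    have e : x - gE δ y = (x - y) + (y - gE δ y) := by abel
    have h2 := gE_sub_norm hδ.le hy'
    have h3 : ‖x - y‖ < δ := by rw [← dist_eq_norm, dist_comm]; exact hyb
    rw [e]; linarith [norm_add_le (x - y) (y - gE δ y)]
  have := ht x (gE δ y) hx' (gE_nonneg _ _) (2 * δ) (by linarith) h1
  have e : 3 * (2 * δ) = ε := by
    have : δ = ε / 6 := rfl
    rw [this]; ring
  rwa [e] at this

lemma PQ.reg_f {t : B → ℝ≥0∞} (ht : PQ t) {x : B} (hx : 0 ≤ x) {ε : ℝ} (hε : 0 < ε) :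
    t (fEps ε x) ≤ Paper.reg t (fEps (ε / 2) x) := by
  have key : ∀ n : ℕ, ENNReal.ofReal (1 - 1 / ((n : ℝ) + 1 + 1)) * t (fEps ε x) ≤
      Paper.reg t (fEps (ε / 2) x) := by
    intro n
    set η := 1 / ((n : ℝ) + 1 + 1) with hη
    have hη0 : 0 < η := by positivity
    have hη1 : η < 1 := by
      rw [hη, div_lt_one (by positivity)]; linarith [(Nat.cast_nonneg n : (0 : ℝ) ≤ n)]
    rw [← ht.smul _ _ (by linarith) (fEps_nonneg _ _)]
    refine le_trans ?_ (le_reg (fEps_nonneg _ _) hη0)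
    have e1 : gE η (fEps (ε / 2) x) = cfcₙ (fun t => max 0 (cutoff (ε / 2) t - η)) x := by
      unfold gE fEps
      rw [← cfcₙ_comp (fun t : ℝ => max 0 (t - η)) (cutoff (ε / 2)) x (by fun_prop) (gE_z hη0.le)
        (cutoff_cont _).continuousOn (cutoff_zero _) (.of_nonneg hx)]
      rfl
    have e2 : (1 - η) • fEps ε x = cfcₙ (fun t => (1 - η) • cutoff ε t) x :=
      (cfcₙ_smul _ _ x (cutoff_cont _).continuousOn (cutoff_zero _)).symm
    have hc1 := cutoff_cont ε
    have hc2 := cutoff_cont (ε / 2)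
    rw [e1, e2]
    refine ht.mono ?_ (cf_mono (by fun_prop) (by fun_prop) (by simp [cutoff_zero])
      (by rw [cutoff_zero]; exact gE_z hη0.le) hx (fun t ht => ?_)) (cf_comm x)
    · exact cf_nonneg hx (fun t _ => mul_nonneg (by linarith) (cutoff_nonneg _ _))
    · rw [smul_eq_mul]
      rcases le_total t (ε / 2) with h | h
      · rw [cutoff_eq_zero hε h]; simp
      · rw [cutoff_one (by linarith : 0 < ε / 2) h]
        refine le_max_of_le_right ?_
        nlinarith [cutoff_le_one ε t]
  have hlim : Tendsto (fun n : ℕ => ENNReal.ofReal (1 - 1 / ((n : ℝ) + 1 + 1)) * t (fEps ε x)) atTop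
      (𝓝 (1 * t (fEps ε x))) := by
    refine ENNReal.Tendsto.mul_const ?_ (Or.inl one_ne_zero)
    rw [← ENNReal.ofReal_one]
    refine ENNReal.tendsto_ofReal ?_
    have := (tendsto_add_atTop_iff_nat 1).2 (tendsto_one_div_add_atTop_nhds_zero_nat (𝕜 := ℝ))
    have := this.const_sub 1
    simpa using this
  rw [one_mul] at hlim
  exact le_of_tendsto' hlim key

end P5

section P6
set_option linter.unusedSectionVars false
set_option linter.unusedVariables false
variable {B : Type*} [NonUnitalCStarAlgebra B] [PartialOrder B] [StarOrderedRing B]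

lemma mem_pedersen {h f : B} (hf : h * f = f) : f ∈ pedersen B := by
  simp only [pedersen, pedersenIn, Set.mem_iInter, Set.mem_ofPred_eq]
  rintro I ⟨⟨-, h0, hadd, hneg, hmul⟩, hI⟩
  obtain ⟨y, hy, hyd⟩ := Metric.mem_closure_iff.1 (hI (Set.mem_univ h)) 1 one_pos
  rw [dist_eq_norm] at hyd
  have hk : ‖((h - y : B) : Unitization ℂ B)‖ < 1 := by rwa [Unitization.norm_inr]
  obtain ⟨w, hw⟩ := (isUnit_one_sub_of_norm_lt_one hk).exists_left_inv
  have e1 : w.fst = 1 := by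
    have := congrArg (fun z : Unitization ℂ B => z.fst) hw
    simpa [sub_eq_add_neg] using this
  have e2 : (1 - ((h - y : B) : Unitization ℂ B)) * (f : Unitization ℂ B) =
      ((y * f : B) : Unitization ℂ B) := by
    rw [sub_mul, one_mul, ← Unitization.inr_mul, ← Unitization.inr_sub]
    congr 1
    rw [sub_mul, hf]; abel
  have e3 : (f : Unitization ℂ B) = w * ((y * f : B) : Unitization ℂ B) := by
    rw [← e2, ← mul_assoc, hw, one_mul]
  have e4 : f = y * f + w.snd * (y * f) := by
    have := congrArg (fun z : Unitization ℂ B => z.snd) e3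
    simpa [e1] using this
  have hyf : y * f ∈ I := (hmul y hy f (Set.mem_univ _)).1
  rw [e4]
  exact hadd _ hyf _ (hmul _ hyf w.snd (Set.mem_univ _)).2

lemma fEps_mem_pedersen {ε : ℝ} (hε : 0 < ε) (x : B) : fEps ε x ∈ pedersen B :=
  mem_pedersen (fEps_mul (ε' := ε / 2) (by positivity) le_rfl x)

/-- domination ideal -/
def dI (E : B) : Set B := {s | ∃ k : ℕ, ∀ τ : QuasiTrace B, dTau τ (star s * s) ≤ k * dTau τ E}

lemma dTau_zero (τ : QuasiTrace B) : dTau τ 0 = 0 := by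
  refine le_antisymm (iSup_le (fun n => ?_)) zero_le
  unfold fEps
  rw [cfcₙ_apply_zero, τ.map_zero]

lemma dI_add (hB : HasCopies B) {E s t : B} (hs : s ∈ dI E) (ht : t ∈ dI E) : s + t ∈ dI E := by
  obtain ⟨k, hk⟩ := hs
  obtain ⟨l, hl⟩ := ht
  refine ⟨k + l, fun τ => ?_⟩
  have h1 := add_nonneg (star_mul_self_nonneg s) (star_mul_self_nonneg t)
  refine (d_mono τ (star_mul_self_nonneg _) h1
    (le_mem_rcl (star_mul_self_nonneg _) h1 (two_sq_ineq s t))).trans ?_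
  refine (d_add hB τ (star_mul_self_nonneg s) (star_mul_self_nonneg t)).trans ?_
  push_cast
  rw [add_mul]
  exact add_le_add (hk τ) (hl τ)

lemma dI_left {E s : B} (hs : s ∈ dI E) (b : B) : b * s ∈ dI E := by
  obtain ⟨k, hk⟩ := hs
  refine ⟨k, fun τ => (d_mono τ (star_mul_self_nonneg _) (star_mul_self_nonneg s) ?_).trans (hk τ)⟩
  have h := mem_rcl_mul_star (star s)
  rw [star_star] at h
  rw [star_mul, mul_assoc]
  exact rcl_mul h _

lemma dI_right {E s : B} (hs : s ∈ dI E) (b : B) : s * b ∈ dI E := by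
  obtain ⟨k, hk⟩ := hs
  refine ⟨k, fun τ => ?_⟩
  have h1 := d_swap τ (star (s * b))
  rw [star_star] at h1
  refine h1.trans ((d_mono τ (mul_star_self_nonneg _) (mul_star_self_nonneg s) ?_).trans
    ((d_swap τ s).trans (hk τ)))
  rw [mul_assoc]
  exact rcl_mul (mem_rcl_mul_star s) _

lemma dI_smul {E s : B} (hs : s ∈ dI E) (c : ℂ) : c • s ∈ dI E := by
  obtain ⟨k, hk⟩ := hs
  refine ⟨k, fun τ => (d_mono τ (star_mul_self_nonneg _) (star_mul_self_nonneg s) ?_).trans (hk τ)⟩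
  have h := mem_rcl_mul_star (star s)
  rw [star_star] at h
  have e : star (c • s) * (c • s) = star s * ((star c * c) • s) := by
    rw [star_smul, smul_mul_smul_comm, mul_smul_comm]
  rw [e]
  exact rcl_mul h _

lemma dI_neg {E s : B} (hs : s ∈ dI E) : -s ∈ dI E := by
  have := dI_smul hs (-1); simpa using this

lemma dI_zero (E : B) : (0 : B) ∈ dI E := ⟨0, fun τ => by simp [dTau_zero]⟩

lemma dI_self {E : B} (hE : 0 ≤ E) : E ∈ dI E := by
  refine ⟨1, fun τ => ?_⟩
  rw [Nat.cast_one, one_mul]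
  refine d_mono τ (star_mul_self_nonneg _) hE ?_
  rw [star_pos hE]; exact mul_mem_rcl _ _

lemma dI_ideal (hB : HasCopies B) (E : B) : IsIdealIn B Set.univ (dI E) :=
  ⟨Set.subset_univ _, dI_zero E, fun x hx y hy => dI_add hB hx hy, fun x hx => dI_neg hx,
    fun x hx b _ => ⟨dI_right hx b, dI_left hx b⟩⟩

lemma tau_le_of_dI {E p : B} (hp : 0 ≤ p) {k : ℕ} {τ : QuasiTrace B}
    (hk : dTau τ (star p * p) ≤ k * dTau τ E) :
    τ.toFun p ≤ ENNReal.ofReal ‖p‖ * (k * dTau τ E) := by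
  by_cases h0 : p = 0
  · simp [h0, τ.map_zero]
  have hn : 0 < ‖p‖ := norm_pos_iff.2 h0
  have e : p = ‖p‖ • (‖p‖⁻¹ • p) := by rw [smul_smul, mul_inv_cancel₀ hn.ne', one_smul]
  have h1 : 0 ≤ ‖p‖⁻¹ • p := smul_nonneg (by positivity) hp
  conv_lhs => rw [e]
  rw [τ.map_smul _ _ hn h1]
  gcongr
  refine (tau_le_d τ (star_mul_self_nonneg p) h1 ?_ (rcl_smul ?_ _)).trans hk
  · rw [norm_smul, norm_inv, norm_norm, inv_mul_cancel₀ hn.ne']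
  · have h := mem_rcl_mul_star (star p)
    rw [star_star] at h
    rwa [star_pos hp] at h ⊢

lemma fEps_mem_her {E : B} (hE : 0 ≤ E) {ε : ℝ} (hε : 0 < ε) : fEps ε E ∈ her E := by
  have h2 : 0 < ε / 2 := by positivity
  refine subset_closure ⟨cfcₙ (dcut (ε / 2)) E * fEps ε E * cfcₙ (dcut (ε / 2)) E, ?_⟩
  have : fEps (ε / 2) E * fEps ε E * fEps (ε / 2) E = fEps ε E := by
    rw [fEps_mul h2 le_rfl, fEps_mul' h2 le_rfl]
  rw [← this]
  conv_lhs => enter [1, 1]; rw [fEps_eq_mul h2 hE]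
  conv_lhs => enter [2]; rw [fEps_eq_mul' h2 hE]
  rw [this]
  simp only [mul_assoc]

/-- base data -/
structure IsBase (E E1 : B) : Prop where
  pos : 0 ≤ E
  pos1 : 0 ≤ E1
  norm1 : ‖E1‖ ≤ 1
  unit : E1 * E = E
  ped : E1 ∈ pedersen B
  cut : ∃ (x : B) (ε : ℝ), 0 ≤ x ∧ 0 < ε ∧ E1 = fEps ε x
  dom : pedersen B ⊆ dI E

/-- normalizing constant -/
def nrm (E : B) (τ : QuasiTrace B) : ℝ≥0∞ :=
  ⨆ a : {a : B // a ∈ her E ∧ 0 ≤ a ∧ ‖a‖ ≤ 1}, τ.toFun a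

lemma IsBase.nrm_le {E E1 : B} (h : IsBase E E1) (τ : QuasiTrace B) : nrm E τ ≤ τ.toFun E1 := by
  refine iSup_le (fun ⟨x, hx, hx0, hx1⟩ => ?_)
  refine τ.pq.L2 h.pos1 h.norm1 hx0 hx1 ?_
  have : her E ⊆ {x | E1 * x = x} := by
    refine closure_minimal ?_ (isClosed_eq (by fun_prop) (by fun_prop))
    rintro _ ⟨y, rfl⟩
    simp only [Set.mem_ofPred_eq, ← mul_assoc, h.unit]
  exact this hx

lemma IsBase.d_le {E E1 : B} (h : IsBase E E1) (τ : QuasiTrace B) : dTau τ E ≤ nrm E τ :=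
  iSup_le (fun n => le_iSup (fun a : {a : B // a ∈ her E ∧ 0 ≤ a ∧ ‖a‖ ≤ 1} => τ.toFun a)
    ⟨_, fEps_mem_her h.pos (one_div_pos' n), fEps_nonneg _ _, fEps_norm_le _ _⟩)

lemma IsBase.nrm_ne_zero {E E1 : B} (h : IsBase E E1) {τ : QuasiTrace B} (hτ : ¬ τ.IsZero) :
    nrm E τ ≠ 0 := by
  intro h0
  apply hτ
  have hd : dTau τ E = 0 := le_antisymm ((h.d_le τ).trans h0.le) zero_le
  have hped : ∀ p ∈ pedersen B, 0 ≤ p → τ.toFun p = 0 := by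
    intro p hp hp0
    obtain ⟨k, hk⟩ := h.dom hp
    have := tau_le_of_dI hp0 (hk τ)
    rw [hd] at this
    simpa using this
  intro x
  by_cases hx : 0 ≤ x
  swap
  · exact τ.zero_of_not_nonneg x hx
  by_cases hx0 : x = 0
  · rw [hx0, τ.map_zero]
  refine le_antisymm ?_ zero_le
  refine lsc_lim τ (z := fun n => x * fEps (1 / ((n : ℝ) + 1)) x) (fun n => ?_) hx ?_ (fun n => ?_)
  · unfold fEps
    rw [cfx (cutoff_cont _) (cutoff_zero _) hx]
    exact cf_nonneg hx (fun t ht => mul_nonneg ht (cutoff_nonneg _ _))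
  · have := approx_unit hx (mem_rcl_self hx)
    refine this.congr (fun n => ?_)
    unfold fEps
    rw [cfx (cutoff_cont _) (cutoff_zero _) hx, cfx' (cutoff_cont _) (cutoff_zero _) hx]
    congr 1; funext t; ring
  · refine (hped _ ?_ ?_).le
    · refine mem_pedersen (h := fEps (1 / ((n : ℝ) + 1) / 2) x) ?_
      have e : x * fEps (1 / ((n : ℝ) + 1)) x = fEps (1 / ((n : ℝ) + 1)) x * x := by
        unfold fEps
        rw [cfx (cutoff_cont _) (cutoff_zero _) hx, cfx' (cutoff_cont _) (cutoff_zero _) hx]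
        congr 1; funext t; ring
      rw [e, ← mul_assoc, fEps_mul (half_pos (one_div_pos' n)) le_rfl]
    · unfold fEps
      rw [cfx (cutoff_cont _) (cutoff_zero _) hx]
      exact cf_nonneg hx (fun t ht => mul_nonneg ht (cutoff_nonneg _ _))

/-- scaled quasitrace -/
def QuasiTrace.scale (τ : QuasiTrace B) (c : ℝ≥0∞) (hc : c ≠ ∞) : QuasiTrace B where
  toFun x := c * τ.toFun x
  zero_of_not_nonneg x hx := by rw [τ.zero_of_not_nonneg x hx, mul_zero]
  map_zero := by rw [τ.map_zero, mul_zero]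
  map_smul r x hr hx := by rw [τ.map_smul r x hr hx, mul_left_comm]
  map_add_of_commute x y hx hy h := by rw [τ.map_add_of_commute x y hx hy h, mul_add]
  map_star_mul_self x := by rw [τ.map_star_mul_self]
  lowerSemicontinuousOn :=
    (ENNReal.continuous_const_mul hc).comp_lowerSemicontinuousOn τ.lowerSemicontinuousOn
      (fun x y h => by dsimp only; gcongr)
  finite_on_pedersen x hx hx0 := ENNReal.mul_lt_top hc.lt_top (τ.finite_on_pedersen x hx hx0)
  exists_matrix_extension := by
    obtain ⟨σ, h1, h2, h3, h4, h5⟩ := τ.exists_matrix_extension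
    refine ⟨fun x => c * σ x, fun a => congrArg (c * ·) (h1 a), ?_, fun r x hr hx => ?_,
      fun x y hx hy h => ?_, fun x => congrArg (c * ·) (h5 x)⟩
    · beta_reduce; rw [h2, mul_zero]
    · beta_reduce; rw [h3 r x hr hx, mul_left_comm]
    · beta_reduce; rw [h4 x y hx hy h, mul_add]

lemma dTau_scale (τ : QuasiTrace B) (c : ℝ≥0∞) (hc : c ≠ ∞) (x : B) :
    dTau (τ.scale c hc) x = c * dTau τ x := by
  unfold dTau; rw [ENNReal.mul_iSup]; rfl

lemma IsBase.lt_of_QT {E E1 : B} (h : IsBase E E1) {x y : B}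
    (hxy : ∀ τ ∈ QTSetHer E, dTau τ x < dTau τ y) {τ : QuasiTrace B} (hτ : ¬ τ.IsZero) :
    dTau τ x < dTau τ y := by
  have h0 := h.nrm_ne_zero hτ
  have h1 : nrm E τ ≠ ∞ := ((h.nrm_le τ).trans_lt (τ.finite_on_pedersen _ h.ped h.pos1)).ne
  have hc : (nrm E τ)⁻¹ ≠ ∞ := ENNReal.inv_ne_top.2 h0
  have h2 : τ.scale _ hc ∈ QTSetHer E := by
    change (⨆ a : {a : B // a ∈ her E ∧ 0 ≤ a ∧ ‖a‖ ≤ 1}, (nrm E τ)⁻¹ * τ.toFun a) = 1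
    rw [← ENNReal.mul_iSup]
    exact ENNReal.inv_mul_cancel h0 h1
  have h3 := hxy _ h2
  rw [dTau_scale, dTau_scale] at h3
  exact lt_of_mul_lt_mul_left' h3

lemma IsBase.d_le_one {E E1 : B} (h : IsBase E E1) {τ : QuasiTrace B} (hτ : τ ∈ QTSetHer E) :
    dTau τ E ≤ 1 := (h.d_le τ).trans_eq hτ

lemma IsBase.one_le {E E1 : B} (h : IsBase E E1) {τ : QuasiTrace B} (hτ : τ ∈ QTSetHer E) :
    1 ≤ τ.toFun E1 := by
  have := h.nrm_le τ
  rwa [show nrm E τ = 1 from hτ] at this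

lemma IsBase.bound {E E1 : B} (h : IsBase E E1) {p : B} (hp : p ∈ pedersen B) (hp0 : 0 ≤ p) :
    ∃ M : ℝ≥0∞, M ≠ ∞ ∧ ∀ τ ∈ QTSetHer E, τ.toFun p ≤ M := by
  obtain ⟨k, hk⟩ := h.dom hp
  refine ⟨ENNReal.ofReal ‖p‖ * (k * 1), by simp [ENNReal.mul_eq_top], fun τ hτ => ?_⟩
  refine (tau_le_of_dI hp0 (hk τ)).trans ?_
  gcongr
  exact h.d_le_one hτ

end P6

section P6b
set_option linter.unusedSectionVars false
set_option linter.unusedVariables false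
variable {C V : Type*} [NonUnitalCStarAlgebra C] [PartialOrder C] [StarOrderedRing C]
  [NonUnitalCStarAlgebra V] [PartialOrder V] [StarOrderedRing V]

lemma emb_nonneg (SB : Stabilization C V) {x : C} (hx : 0 ≤ x) : 0 ≤ SB.emb 0 0 x := by
  obtain ⟨s, rfl⟩ := CStarAlgebra.nonneg_iff_eq_star_mul_self.1 hx
  have : SB.emb 0 0 (star s * s) = star (SB.emb 0 0 s) * SB.emb 0 0 s := by
    rw [SB.emb_star, SB.emb_mul]; simp
  rw [this]; exact star_mul_self_nonneg _

lemma emb_cont (SB : Stabilization C V) (i j : ℕ) : Continuous (SB.emb i j) :=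
  (AddMonoidHomClass.isometry_of_norm (SB.emb i j) (SB.norm_emb i j)).continuous

lemma dI_dense (SB : Stabilization C V) (hs : IsSimpleCStar C) {e : C} (he : 0 ≤ e) (he0 : e ≠ 0) :
    Set.univ ⊆ closure (dI (SB.emb 0 0 e)) := by
  set E := SB.emb 0 0 e with hE
  have hB := hasCopies SB
  have cadd : ∀ x ∈ closure (dI E), ∀ y ∈ closure (dI E), x + y ∈ closure (dI E) :=
    fun x hx y hy => map_mem_closure₂ continuous_add hx hy (fun a ha b hb => dI_add hB ha hb)
  have cneg : ∀ x ∈ closure (dI E), -x ∈ closure (dI E) :=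
    fun x hx => map_mem_closure continuous_neg hx (fun a ha => dI_neg ha)
  have cl : ∀ (b : V), ∀ x ∈ closure (dI E), b * x ∈ closure (dI E) :=
    fun b x hx => map_mem_closure (continuous_const_mul b) hx (fun a ha => dI_left ha b)
  have cr : ∀ (b : V), ∀ x ∈ closure (dI E), x * b ∈ closure (dI E) :=
    fun b x hx => map_mem_closure (f := fun z => z * b) (continuous_mul_const b) hx (fun a ha => dI_right ha b)
  have cs : ∀ (c : ℂ), ∀ x ∈ closure (dI E), c • x ∈ closure (dI E) :=
    fun c x hx => map_mem_closure (continuous_const_smul c) hx (fun a ha => dI_smul ha c)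
  have c0 : (0 : V) ∈ closure (dI E) := subset_closure (dI_zero E)
  have e00 : ∀ x y : C, SB.emb 0 0 (x * y) = SB.emb 0 0 x * SB.emb 0 0 y := fun x y => by
    rw [SB.emb_mul]; simp
  let J : TwoSidedIdeal C := TwoSidedIdeal.mk' (SB.emb 0 0 ⁻¹' closure (dI E))
    (by simpa using c0) (fun {x y} hx hy => by
      simp only [Set.mem_preimage, map_add] at *; exact cadd _ hx _ hy)
    (fun {x} hx => by simp only [Set.mem_preimage, map_neg] at *; exact cneg _ hx)
    (fun {x y} hy => by simp only [Set.mem_preimage, e00] at *; exact cl _ _ hy)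
    (fun {x y} hy => by simp only [Set.mem_preimage, e00] at *; exact cr _ _ hy)
  have hJ : (J : Set C) = SB.emb 0 0 ⁻¹' closure (dI E) := TwoSidedIdeal.coe_mk' ..
  have hJu : (J : Set C) = Set.univ := by
    refine (hs.2 J ?_).resolve_left (fun h => ?_)
    · rw [hJ]; exact isClosed_closure.preimage (emb_cont SB 0 0)
    · have : e ∈ (J : Set C) := by
        rw [hJ]; exact subset_closure (dI_self (emb_nonneg SB he))
      rw [h] at this
      exact he0 this
  have h00 : ∀ x : C, SB.emb 0 0 x ∈ closure (dI E) := fun x => by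
    have : x ∈ (J : Set C) := by rw [hJu]; trivial
    rwa [hJ] at this
  have hij : ∀ (i j : ℕ) (x : C), SB.emb i j x ∈ closure (dI E) := fun i j x => by
    refine rcl_induct (S := SB.emb i j ⁻¹' closure (dI E)) (mem_rcl_mul_star x)
      (isClosed_closure.preimage (emb_cont SB i j)) (fun y => ?_)
    have : SB.emb i j (x * star x * y) = SB.emb i 0 x * SB.emb 0 0 (star x) * SB.emb 0 j y := by
      rw [SB.emb_mul, if_pos rfl, SB.emb_mul, if_pos rfl]
    rw [Set.mem_preimage, this]
    exact cr _ _ (cl _ _ (h00 _))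
  have hspan : (Submodule.span ℂ {w : V | ∃ (i j : ℕ) (a : C), w = SB.emb i j a} : Set V) ⊆
      closure (dI E) := by
    intro w hw
    induction hw using Submodule.span_induction with
    | mem x hx => obtain ⟨i, j, a, rfl⟩ := hx; exact hij i j a
    | zero => exact c0
    | add x y _ _ hx hy => exact cadd _ hx _ hy
    | smul c x _ hx => exact cs _ _ hx
  intro w _
  exact closure_minimal hspan isClosed_closure (SB.dense_span w)

/-- corner embedding -/
def embHom (SB : Stabilization C V) : (C × C) →⋆ₙₐ[ℂ] V where
  toFun p := SB.emb 0 0 p.1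
  map_smul' r p := by simp
  map_zero' := by simp
  map_add' p q := by simp
  map_mul' p q := by simp [SB.emb_mul]
  map_star' p := by simp [SB.emb_star]

lemma exists_base (SB : Stabilization C V) (hs : IsSimpleCStar C) :
    ∃ e : C, 0 ≤ e ∧ e ≠ 0 ∧ e ∈ pedersen C ∧ ∃ E1 : V, IsBase (SB.emb 0 0 e) E1 := by
  obtain ⟨x, hx⟩ := hs.1
  set e0 := star x * x with he0
  have hpos : 0 ≤ e0 := star_mul_self_nonneg x
  have hne : e0 ≠ 0 := by rw [he0]; simpa using hx
  obtain ⟨n, hn⟩ : ∃ n : ℕ, fEps (1 / ((n : ℝ) + 1)) e0 ≠ 0 := by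
    by_contra! hcon
    have := approx_unit hpos (mem_rcl_self hpos)
    simp only [hcon, zero_mul] at this
    exact hne (tendsto_nhds_unique this tendsto_const_nhds)
  set ε := 1 / ((n : ℝ) + 1) with hε
  have hε0 : 0 < ε := one_div_pos' n
  refine ⟨fEps ε e0, fEps_nonneg _ _, hn, fEps_mem_pedersen hε0 _, SB.emb 0 0 (fEps (ε / 2) e0),
    emb_nonneg SB (fEps_nonneg _ _), emb_nonneg SB (fEps_nonneg _ _), ?_, ?_, ?_,
    ⟨SB.emb 0 0 e0, ε / 2, emb_nonneg SB hpos, half_pos hε0, ?_⟩, ?_⟩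
  · rw [SB.norm_emb]; exact fEps_norm_le _ _
  · rw [SB.emb_mul, if_pos rfl, fEps_mul (by positivity) le_rfl]
  · refine mem_pedersen (h := SB.emb 0 0 (fEps (ε / 2 / 2) e0)) ?_
    rw [SB.emb_mul, if_pos rfl, fEps_mul (by positivity) le_rfl]
  · exact (hom_cfc (embHom SB) (cutoff_cont (ε / 2)) (cutoff_zero _) (.of_nonneg hpos)
      (.of_nonneg hpos)).symm
  · intro p hp
    simp only [pedersen, pedersenIn, Set.mem_iInter, Set.mem_ofPred_eq] at hp
    exact hp _ ⟨dI_ideal (hasCopies SB) _, dI_dense SB hs (fEps_nonneg _ _) hn⟩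

end P6b

section P7
set_option linter.unusedSectionVars false
set_option linter.unusedVariables false
variable {B : Type*} [NonUnitalCStarAlgebra B] [PartialOrder B] [StarOrderedRing B]

/-- ultralimit -/
def ulim (u : ℕ → ℝ≥0∞) : ℝ≥0∞ := (Ultrafilter.map u (hyperfilter ℕ)).lim

lemma ulim_tendsto (u : ℕ → ℝ≥0∞) : Tendsto u (hyperfilter ℕ : Filter ℕ) (𝓝 (ulim u)) :=
  (Ultrafilter.map u (hyperfilter ℕ)).le_nhds_lim

lemma ulim_eq {u : ℕ → ℝ≥0∞} {l : ℝ≥0∞} (h : Tendsto u (hyperfilter ℕ : Filter ℕ) (𝓝 l)) :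
    ulim u = l := tendsto_nhds_unique (ulim_tendsto u) h

lemma ulim_le {u v : ℕ → ℝ≥0∞} (h : ∀ n, u n ≤ v n) : ulim u ≤ ulim v :=
  le_of_tendsto_of_tendsto' (ulim_tendsto u) (ulim_tendsto v) h

lemma ulim_const (c : ℝ≥0∞) : ulim (fun _ => c) = c := ulim_eq tendsto_const_nhds

lemma PQ.ulim {t : ℕ → B → ℝ≥0∞} (ht : ∀ n, PQ (t n)) : PQ (fun x => Paper.ulim (fun n => t n x)) where
  zero := by simp only [(ht _).zero, ulim_const]
  smul r a hr ha := by
    simp only [(ht _).smul r a hr ha]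
    exact ulim_eq (ENNReal.Tendsto.const_mul (ulim_tendsto _) (Or.inr ENNReal.ofReal_ne_top))
  add a b ha hb h := by
    simp only [(ht _).add a b ha hb h]
    exact ulim_eq ((ulim_tendsto _).add (ulim_tendsto _))
  trace x := by simp only [(ht _).trace x]

/-- two by two matrices -/
abbrev M2 (B : Type*) := CStarMatrix (Fin 2) (Fin 2) B

lemma nn_iff {x : B} : 0 ≤ x ↔ ∃ y, x = star y * y :=
  CStarAlgebra.nonneg_iff_eq_star_mul_self

lemma M2_nonneg {x : M2 B} : 0 ≤ x ↔ ∃ y, x = star y * y :=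
  nn_iff (B := M2 B)

lemma mat_PQ {σ : Matrix (Fin 2) (Fin 2) B → ℝ≥0∞} (h2 : σ 0 = 0)
    (h3 : ∀ (r : ℝ) (x : Matrix (Fin 2) (Fin 2) B), 0 < r → (∃ y, x = star y * y) →
      σ (r • x) = ENNReal.ofReal r * σ x)
    (h4 : ∀ x y : Matrix (Fin 2) (Fin 2) B, (∃ z, x = star z * z) → (∃ z, y = star z * z) →
      x * y = y * x → σ (x + y) = σ x + σ y)
    (h5 : ∀ x : Matrix (Fin 2) (Fin 2) B, σ (star x * x) = σ (x * star x)) :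
    PQ (B := M2 B) (fun x => σ x) where
  zero := h2
  smul r a hr ha := h3 r a hr (M2_nonneg.1 ha)
  add a b ha hb h := h4 a b (M2_nonneg.1 ha) (M2_nonneg.1 hb) h
  trace x := h5 x

lemma gE_hom {D : Type*} [NonUnitalCStarAlgebra D] [PartialOrder D] [StarOrderedRing D]
    (φ : (B × B) →⋆ₙₐ[ℂ] D) {ε : ℝ} (hε : 0 < ε) {a : B} (ha : 0 ≤ a) :
    gE ε (φ (a, 0)) = φ (gE ε a, 0) := by
  have h : gE ε (0 : B) = 0 := gE_eq_zero le_rfl (by simpa using hε.le)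
  have := hom_cfc φ (gE_cont ε) (gE_z hε.le) (.of_nonneg ha) (.of_nonneg (le_refl (0 : B)))
  rw [← h]
  rw [gE_eq_zero le_rfl (by simpa using hε.le)]
  unfold gE at h ⊢
  rw [h] at this
  rw [this]

lemma reg_hom {D : Type*} [NonUnitalCStarAlgebra D] [PartialOrder D] [StarOrderedRing D]
    (φ : (B × B) →⋆ₙₐ[ℂ] D) {s : D → ℝ≥0∞} {t : B → ℝ≥0∞} (hst : ∀ a, s (φ (a, 0)) = t a)
    (hpos : ∀ a, 0 ≤ φ (a, 0) → 0 ≤ a) (a : B) : reg s (φ (a, 0)) = reg t a := by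
  by_cases ha : 0 ≤ a
  · have h1 : 0 ≤ φ (a, 0) := by
      obtain ⟨x, rfl⟩ := CStarAlgebra.nonneg_iff_eq_star_mul_self.1 ha
      have : ((star x * x, 0) : B × B) = star ((x, 0) : B × B) * (x, 0) := by
        ext <;> simp
      rw [this, map_mul, map_star]; exact star_mul_self_nonneg _
    rw [reg_pos ha, reg_pos h1]
    refine iSup_congr (fun ε => iSup_congr (fun hε => ?_))
    rw [gE_hom φ hε ha, hst]
  · have h1 : ¬ 0 ≤ φ (a, 0) := fun h => ha (hpos a h)
    unfold reg; rw [if_neg ha, if_neg h1]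

lemma diag_eq (a : B) : (fun i j => if i = 0 ∧ j = 0 then a else 0 : Matrix (Fin 2) (Fin 2) B) =
    (diagHom B (a, 0) : M2 B) := by
  ext i j; fin_cases i <;> fin_cases j <;> simp [diagHom, CStarMatrix.ofMatrix_apply]

lemma diag_pos (a : B) (h : 0 ≤ (diagHom B (a, 0) : M2 B)) : 0 ≤ a := by
  obtain ⟨y, hy⟩ := M2_nonneg.1 h
  have h1 := congrFun (congrFun hy 0) 0
  have e1 : (diagHom B (a, 0) : M2 B) 0 0 = a := by
    simp [diagHom, CStarMatrix.ofMatrix_apply]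
  have e2 : (star y * y) 0 0 = star (y 0 0) * y 0 0 + star (y 1 0) * y 1 0 := by
    simp [CStarMatrix.mul_apply, CStarMatrix.star_apply]
  rw [e1, e2] at h1
  rw [h1]
  exact add_nonneg (star_mul_self_nonneg _) (star_mul_self_nonneg _)

/-- regularized ultralimit of quasitraces -/
def ultra (τ : ℕ → QuasiTrace B)
    (hfin : ∀ p ∈ pedersen B, 0 ≤ p → ulim (fun n => (τ n).toFun p) < ∞) : QuasiTrace B where
  toFun := reg (fun x => ulim (fun n => (τ n).toFun x))
  zero_of_not_nonneg a ha := if_neg ha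
  map_zero := (PQ.ulim (fun n => (τ n).pq)).reg.zero
  map_smul := (PQ.ulim (fun n => (τ n).pq)).reg.smul
  map_add_of_commute := (PQ.ulim (fun n => (τ n).pq)).reg.add
  map_star_mul_self := (PQ.ulim (fun n => (τ n).pq)).reg.trace
  lowerSemicontinuousOn := reg_lsc (fun x y hx hy δ hδ hxy =>
    ulim_le (fun n => lsc_mono (τ n) hx hy hδ hxy))
  finite_on_pedersen p hp hp0 :=
    ((PQ.ulim (fun n => (τ n).pq)).reg_le_self hp0).trans_lt (hfin p hp hp0)
  exists_matrix_extension := by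
    choose σ h1 h2 h3 h4 h5 using fun n => (τ n).exists_matrix_extension
    have hpq : PQ (B := M2 B) (reg (fun x => ulim (fun n => σ n x))) :=
      (PQ.ulim (fun n => mat_PQ (h2 n) (h3 n) (h4 n) (h5 n))).reg
    refine ⟨fun x => reg (B := M2 B) (fun x => ulim (fun n => σ n x)) x, fun a => ?_, hpq.zero,
      fun r x hr hx => hpq.smul r x hr (M2_nonneg.2 hx),
      fun x y hx hy h => hpq.add x y (M2_nonneg.2 hx) (M2_nonneg.2 hy) h, hpq.trace⟩
    beta_reduce
    rw [diag_eq]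
    refine reg_hom (diagHom B) (fun b => ?_) diag_pos a
    congr 1
    funext n
    rw [← h1 n b, diag_eq]

lemma gap {E E1 : B} (h : IsBase E E1) {a b : B} (ha : 0 ≤ a) (hb : 0 ≤ b)
    (hω : omegaOn (closure (QTSetHer E)) a = 0)
    (hlt : ∀ τ : QuasiTrace B, ¬ τ.IsZero → dTau τ a < dTau τ b) :
    ∃ κ : ℝ≥0∞, κ ≠ 0 ∧ κ ≠ ∞ ∧ ∀ τ ∈ QTSetHer E, dTau τ a + κ ≤ dTau τ b := by
  by_contra! hcon
  have hκ : ∀ n : ℕ, ((n + 1 : ℕ) : ℝ≥0∞)⁻¹ ≠ 0 ∧ ((n + 1 : ℕ) : ℝ≥0∞)⁻¹ ≠ ∞ := fun n =>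
    ⟨ENNReal.inv_ne_zero.2 (ENNReal.natCast_ne_top _),
      ENNReal.inv_ne_top.2 (by exact_mod_cast Nat.succ_ne_zero n)⟩
  choose τ hτ hτ2 using fun n : ℕ => hcon _ (hκ n).1 (hκ n).2
  have hfin : ∀ p ∈ pedersen B, 0 ≤ p → ulim (fun n => (τ n).toFun p) < ∞ := by
    intro p hp hp0
    obtain ⟨M, hM, hM2⟩ := h.bound hp hp0
    refine lt_of_le_of_lt ?_ hM.lt_top
    rw [← ulim_const M]
    exact ulim_le (fun n => hM2 _ (hτ n))
  set t : B → ℝ≥0∞ := fun x => ulim (fun n => (τ n).toFun x) with ht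
  have hpq : PQ t := PQ.ulim (fun n => (τ n).pq)
  have hT : ∀ x, (ultra τ hfin).toFun x = reg t x := fun x => rfl
  have hT0 : ¬ (ultra τ hfin).IsZero := by
    intro hz
    obtain ⟨x, ε, hx, hε, rfl⟩ := h.cut
    have h1 := hpq.reg_f hx hε
    rw [← hT, hz] at h1
    have h2 : 1 ≤ t (fEps ε x) := by
      rw [← ulim_const 1]
      exact ulim_le (fun n => h.one_le (hτ n))
    exact absurd (h2.trans h1) (by simp)
  refine absurd (hlt _ hT0) (not_lt.2 ?_)
  refine ENNReal.le_of_forall_pos_le_add (fun κ hκ0 _ => ?_)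
  have hω' : omegaOn (closure (QTSetHer E)) a < (κ : ℝ≥0∞) := by
    rw [hω]; exact_mod_cast hκ0
  obtain ⟨k, hk⟩ := iInf_lt_iff.1 hω'
  have hk2 : ∀ n, dTau (τ n) a ≤ (τ n).toFun (fEps (1 / ((k : ℝ) + 1)) a) + κ := by
    intro n
    have h1 := (le_iSup₂ (f := fun (τ : QuasiTrace B) (_ : τ ∈ closure (QTSetHer E)) =>
      dTau τ a - τ.toFun (fEps (1 / ((k : ℝ) + 1)) a)) (τ n) (subset_closure (hτ n))).trans hk.le
    exact (tsub_le_iff_left.1 h1)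
  refine iSup_le (fun m => ?_)
  rw [hT]
  refine (hpq.reg_le_self (fEps_nonneg _ _)).trans ?_
  have h1 : t (fEps (1 / ((m : ℝ) + 1)) b) ≤ t (fEps (1 / ((k : ℝ) + 1)) a) + κ := by
    have h3 : Tendsto (fun n : ℕ => ((n + 1 : ℕ) : ℝ≥0∞)⁻¹) (hyperfilter ℕ : Filter ℕ) (𝓝 0) :=
      (ENNReal.tendsto_inv_nat_nhds_zero.comp (tendsto_add_atTop_nat 1)).mono_left
        Nat.hyperfilter_le_atTop
    have h2 : Tendsto (fun n : ℕ => (τ n).toFun (fEps (1 / ((k : ℝ) + 1)) a) + κ +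
        ((n + 1 : ℕ) : ℝ≥0∞)⁻¹) (hyperfilter ℕ : Filter ℕ)
        (𝓝 (t (fEps (1 / ((k : ℝ) + 1)) a) + κ + 0)) :=
      ((ulim_tendsto _).add tendsto_const_nhds).add h3
    rw [add_zero] at h2
    refine le_of_tendsto_of_tendsto' (ulim_tendsto _) h2 (fun n => ?_)
    refine (le_dTau (τ n) hb (one_div_pos' m)).trans ((hτ2 n).le.trans ?_)
    gcongr
    exact hk2 n
  refine h1.trans ?_
  gcongr
  refine (hpq.reg_f ha (one_div_pos' k)).trans ?_
  rw [← hT]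
  exact le_dTau _ ha (half_pos (one_div_pos' k))

end P7

section P8
set_option linter.unusedSectionVars false
set_option linter.unusedVariables false
variable {B : Type*} [NonUnitalCStarAlgebra B] [PartialOrder B] [StarOrderedRing B]

/-- tent function -/
def rfun (δ : ℝ) : ℝ → ℝ := fun t => min t (max 0 (2 * δ - t))

lemma rfun_cont (δ : ℝ) : Continuous (rfun δ) := by unfold rfun; fun_prop
lemma rfun_zero (δ : ℝ) : rfun δ 0 = 0 := by simp [rfun]
lemma rfun_nonneg {δ t : ℝ} (ht : 0 ≤ t) : 0 ≤ rfun δ t := le_min ht (le_max_left _ _)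
lemma rfun_le (δ t : ℝ) : rfun δ t ≤ t := min_le_left _ _
lemma rfun_eq_zero {δ t : ℝ} (ht : 0 ≤ t) (h : 2 * δ ≤ t) : rfun δ t = 0 := by
  unfold rfun; rw [max_eq_left (by linarith), min_eq_right ht]
lemma le_rfun {δ η t : ℝ} (h1 : η ≤ t) (h2 : η ≤ 2 * δ - t) : η ≤ rfun δ t :=
  le_min h1 (h2.trans (le_max_right _ _))

/-- tail element -/
def rE (δ : ℝ) (a : B) : B := cfcₙ (rfun δ) a

lemma rE_nonneg (δ : ℝ) {a : B} (ha : 0 ≤ a) : 0 ≤ rE δ a := cf_nonneg ha (fun _ h => rfun_nonneg h)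

lemma rE_mem (δ : ℝ) {a : B} (ha : 0 ≤ a) : rE δ a ∈ rcl a := by
  refine le_mem_rcl (rE_nonneg δ ha) ha (r := 1) ?_
  rw [one_smul]
  conv_rhs => rw [← cfcₙ_id' ℝ a (ha := IsSelfAdjoint.of_nonneg ha)]
  exact cf_mono (rfun_cont δ) continuous_id (rfun_zero δ) rfl ha (fun t _ => rfun_le δ t)

lemma fEps_rE (η δ : ℝ) {a : B} (ha : 0 ≤ a) :
    fEps η (rE δ a) = cfcₙ (fun t => cutoff η (rfun δ t)) a := by
  unfold fEps rE
  rw [← cfcₙ_comp (cutoff η) (rfun δ) a (cutoff_cont _).continuousOn (cutoff_zero _)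
    (rfun_cont δ).continuousOn (rfun_zero δ) (.of_nonneg ha)]
  rfl

lemma tail_bound (τ : QuasiTrace B) {a : B} (ha : 0 ≤ a) {δ ε : ℝ} (hε : 0 < ε)
    (h : 2 * δ ≤ ε / 2) : dTau τ (rE δ a) + τ.toFun (fEps ε a) ≤ dTau τ a := by
  unfold dTau
  rw [ENNReal.iSup_add]
  refine iSup_le (fun m => ?_)
  change _ ≤ dTau τ a
  have hm := one_div_pos' m
  rw [← τ.map_add_of_commute _ _ (fEps_nonneg _ _) (fEps_nonneg _ _) (by
    rw [fEps_rE _ _ ha]; exact cf_comm a)]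
  refine tau_le_d τ ha (add_nonneg (fEps_nonneg _ _) (fEps_nonneg _ _)) ?_
    (rcl_add (rcl_trans (fEps_mem hm (rE_nonneg δ ha)) (rE_mem δ ha)) (fEps_mem hε ha))
  rw [fEps_rE _ _ ha]
  unfold fEps
  rw [cfa (f := fun t => cutoff (1 / ((m:ℝ)+1)) (rfun δ t)) ((cutoff_cont _).comp (rfun_cont δ)) (cutoff_cont _)
    (by simp [rfun_zero, cutoff_zero]) (cutoff_zero _)]
  refine cf_norm ha zero_le_one (fun t ht => ?_)
  rw [abs_of_nonneg (add_nonneg (cutoff_nonneg _ _) (cutoff_nonneg _ _))]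
  rcases le_total (2 * δ) t with h1 | h1
  · simp only [Function.comp, rfun_eq_zero ht h1, cutoff_zero, zero_add]
    exact cutoff_le_one _ _
  · rw [cutoff_eq_zero hε (h1.trans h), add_zero]
    exact cutoff_le_one _ _

/-- square root of increment -/
def pE (δ' δ : ℝ) (a : B) : B := cfcₙ (fun t => Real.sqrt (cutoff δ' t - cutoff δ t)) a

lemma pfun_cont (δ' δ : ℝ) : Continuous (fun t => Real.sqrt (cutoff δ' t - cutoff δ t)) :=
  ((cutoff_cont δ').sub (cutoff_cont δ)).sqrt

lemma pfun_zero (δ' δ : ℝ) : Real.sqrt (cutoff δ' 0 - cutoff δ 0) = 0 := by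
  simp [cutoff_zero]

lemma pE_sq {δ' δ : ℝ} (h0 : 0 < δ') (h : δ' ≤ δ) {a : B} (ha : 0 ≤ a) :
    pE δ' δ a * pE δ' δ a = fEps δ' a - fEps δ a := by
  unfold pE fEps
  rw [cfm (pfun_cont _ _) (pfun_cont _ _) (pfun_zero _ _) (pfun_zero _ _),
    cfs (cutoff_cont _) (cutoff_cont _) (cutoff_zero _) (cutoff_zero _)]
  exact cf_congr ha (fun t ht => Real.mul_self_sqrt (sub_nonneg.2 (cutoff_anti h0 h ht)))

lemma h_pE {δ' δ : ℝ} (h0 : 0 < δ') (h : δ' ≤ δ) {a : B} (ha : 0 ≤ a) :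
    fEps (δ' / 2) (rE δ a) * pE δ' δ a = pE δ' δ a := by
  have hδ : 0 < δ := by linarith
  rw [fEps_rE _ _ ha]
  unfold pE
  rw [cfm (f := fun t => cutoff (δ' / 2) (rfun δ t)) ((cutoff_cont _).comp (rfun_cont δ))
    (pfun_cont _ _) (by simp [rfun_zero, cutoff_zero]) (pfun_zero _ _)]
  refine cf_congr ha (fun t ht => ?_)
  rcases le_total t (δ' / 2) with h1 | h1
  · rw [cutoff_eq_zero h0 h1, cutoff_eq_zero hδ (by linarith)]; simp
  rcases le_total δ t with h2 | h2
  · rw [cutoff_one h0 (by linarith), cutoff_one hδ h2]; simp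
  · rw [cutoff_one (half_pos h0) (le_rfun h1 (by linarith)), one_mul]

/-- invariant of the iteration -/
structure Inv (E a : B) (δ : ℝ) (κ : ℝ≥0∞) (c : B) : Prop where
  δpos : 0 < δ
  κpos : κ ≠ 0
  κfin : κ ≠ ∞
  cpos : 0 ≤ c
  le : ∀ τ ∈ QTSetHer E, dTau τ (rE δ a) + κ ≤ dTau τ c

lemma step (hB : HasCopies B) (hsc : StrictComparison B) {E E1 : B} (h : IsBase E E1) {a : B}
    (ha : 0 ≤ a) (hω : omegaOn (closure (QTSetHer E)) a = 0)
    {δ : ℝ} {κ : ℝ≥0∞} {c : B} (I : Inv E a δ κ c) :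
    ∃ (δ' : ℝ) (κ' : ℝ≥0∞) (c' z : B), Inv E a δ' κ' c' ∧ δ' ≤ δ / 2 ∧ c' ∈ rcl c ∧ z ∈ rcl c ∧
      star z * z = fEps δ' a - fEps δ a ∧ star z * c' = 0 := by
  obtain ⟨hδ, hκ0, hκ, hc, hle⟩ := I
  have hω2 : ∀ κ : ℝ≥0∞, κ ≠ 0 → ∃ k : ℕ, ∀ τ ∈ QTSetHer E,
      dTau τ a ≤ τ.toFun (fEps (1 / ((k : ℝ) + 1)) a) + κ := by
    intro κ hκ0
    have hω' : omegaOn (closure (QTSetHer E)) a < κ := by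
      rw [hω]; exact pos_iff_ne_zero.2 hκ0
    obtain ⟨k, hk⟩ := iInf_lt_iff.1 hω'
    refine ⟨k, fun τ hτ => ?_⟩
    have h1 := (le_iSup₂ (f := fun (τ : QuasiTrace B) (_ : τ ∈ closure (QTSetHer E)) =>
      dTau τ a - τ.toFun (fEps (1 / ((k : ℝ) + 1)) a)) τ (subset_closure hτ)).trans hk.le
    exact (tsub_le_iff_left.1 h1)
  have hfin : ∀ (τ : QuasiTrace B) (k : ℕ), τ.toFun (fEps (1 / ((k : ℝ) + 1)) a) ≠ ∞ :=
    fun τ k => (τ.finite_on_pedersen _ (fEps_mem_pedersen (one_div_pos' k) a) (fEps_nonneg _ _)).ne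
  have hrfin : ∀ τ ∈ QTSetHer E, dTau τ (rE δ a) ≠ ∞ := by
    intro τ hτ
    obtain ⟨k, hk⟩ := hω2 1 one_ne_zero
    refine ne_top_of_le_ne_top ?_ ((d_mono τ (rE_nonneg δ ha) ha (rE_mem δ ha)).trans (hk τ hτ))
    exact ENNReal.add_ne_top.2 ⟨hfin τ k, ENNReal.one_ne_top⟩
  have hκ2 : κ / 2 ≠ 0 := by simp [hκ0]
  have hκ2' : κ / 2 ≠ ∞ := ENNReal.div_ne_top hκ two_ne_zero
  obtain ⟨k, hk⟩ := hω2 (κ / 2) hκ2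
  have hk0 := one_div_pos' k
  set δ' := min (δ / 2) (1 / ((k : ℝ) + 1) / 4) with hδ'
  have hδ'0 : 0 < δ' := lt_min (by linarith) (by linarith)
  have hδ'1 : δ' ≤ δ / 2 := min_le_left _ _
  have hδ'2 : δ' ≤ 1 / ((k : ℝ) + 1) / 4 := min_le_right _ _
  have htail : ∀ τ ∈ QTSetHer E, dTau τ (rE δ' a) ≤ κ / 2 := by
    intro τ hτ
    have h1 := (tail_bound τ ha (δ := δ') hk0 (by linarith)).trans (hk τ hτ)
    rw [add_comm] at h1
    exact (ENNReal.add_le_add_iff_left (hfin τ k)).1 h1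
  have hr0 := rE_nonneg δ ha
  have hcz : CuntzLE (rE δ a) c := by
    refine hsc _ _ hr0 hc (fun τ hτ => h.lt_of_QT (fun σ hσ => ?_) hτ)
    exact (ENNReal.lt_add_right (hrfin σ hσ) hκ0).trans_le (hle σ hσ)
  obtain ⟨v, hv, hvv⟩ := rordam hr0 hc hcz (half_pos hδ'0)
  have hhp := h_pE hδ'0 (by linarith : δ' ≤ δ) ha
  have hpp := pE_sq hδ'0 (by linarith : δ' ≤ δ) ha
  have hps : star (pE δ' δ a) = pE δ' δ a := cf_star _ _
  set H := fEps (δ' / 2) (rE δ a) with hH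
  set p := pE δ' δ a with hp
  set u := v * star v with hu
  have hus : star u = u := by rw [hu, star_mul, star_star]
  have huz : u * (v * p) = v * p := by
    calc u * (v * p) = v * ((star v * v) * p) := by simp only [hu, mul_assoc]
      _ = v * p := by rw [hvv, mul_assoc, hhp, hhp]
  have hum : u ∈ rcl c := rcl_mul hv _
  set s := CFC.sqrt c with hs
  have hss : s * s = c := CFC.sqrt_mul_sqrt_self c hc
  have hst : star s = s := star_pos (CFC.sqrt_nonneg c)
  set X := s - s * u with hX
  set c' := star X * X with hc'
  have hcX : c' = c - u * c - (c * u - u * c * u) := by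
    rw [hc', hX, star_sub, star_mul, hus, hst, ← hss]
    simp only [sub_mul, mul_sub, mul_assoc]
  have hc'0 : 0 ≤ c' := star_mul_self_nonneg X
  have hXz : X * (v * p) = 0 := by
    rw [hX, sub_mul, mul_assoc s u, huz, sub_self]
  refine ⟨δ', κ / 2, c', v * p, ⟨hδ'0, hκ2, hκ2', hc'0, fun τ hτ => ?_⟩, hδ'1, ?_, rcl_mul hv _,
    ?_, ?_⟩
  · have h1 : dTau τ c ≤ dTau τ c' + dTau τ (rE δ a) := by
      have hY0 : 0 ≤ star (s * u) * (s * u) := star_mul_self_nonneg _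
      have e1 : c ≤ (2 : ℝ) • (c' + star (s * u) * (s * u)) := by
        have := two_sq_ineq X (s * u)
        rwa [show X + s * u = s by rw [hX]; abel, hst, hss] at this
      refine (d_mono τ hc (add_nonneg hc'0 hY0) (le_mem_rcl hc (add_nonneg hc'0 hY0) e1)).trans ?_
      refine (d_add hB τ hc'0 hY0).trans ?_
      gcongr
      calc dTau τ (star (s * u) * (s * u)) ≤ dTau τ u := by
            refine d_mono τ hY0 (mul_star_self_nonneg v) ?_
            rw [star_mul, hus, mul_assoc]
            exact mul_mem_rcl _ _
        _ ≤ dTau τ (star v * v) := d_swap τ v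
        _ ≤ dTau τ (rE δ a) := by
            refine d_mono τ (star_mul_self_nonneg v) hr0 ?_
            rw [hvv]
            exact rcl_mul (fEps_mem (half_pos hδ'0) hr0) _
    have h2 := (hle τ hτ).trans h1
    rw [add_comm (dTau τ c')] at h2
    have h3 : κ ≤ dTau τ c' := (ENNReal.add_le_add_iff_left (hrfin τ hτ)).1 h2
    calc dTau τ (rE δ' a) + κ / 2 ≤ κ / 2 + κ / 2 := by gcongr; exact htail τ hτ
      _ = κ := ENNReal.add_halves κ
      _ ≤ _ := h3
  · rw [hcX]
    exact rcl_sub (rcl_sub (mem_rcl_self hc) (rcl_mul hum _))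
      (rcl_sub (mul_mem_rcl _ _) (by rw [mul_assoc]; exact rcl_mul hum _))
  · calc star (v * p) * (v * p) = p * ((star v * v) * p) := by
          rw [star_mul, hps]; simp only [mul_assoc]
      _ = _ := by rw [hvv, mul_assoc, hhp, hhp, hpp]
  · have : star (X * (v * p)) = 0 := by rw [hXz, star_zero]
    rw [star_mul] at this
    rw [hc', ← mul_assoc, this, zero_mul]

lemma fEps_big {a : B} (ha : 0 ≤ a) : fEps (2 * ‖a‖ + 2) a = 0 := by
  have : fEps (2 * ‖a‖ + 2) a = cfcₙ (fun _ : ℝ => 0) a := by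
    refine cfcₙ_congr (fun t ht => ?_)
    have h1 : ‖t‖ ≤ ‖a‖ :=
      NonUnitalIsometricContinuousFunctionalCalculus.norm_quasispectrum_le a ht (.of_nonneg ha)
    have := (le_abs_self t).trans h1
    exact cutoff_eq_zero (by positivity) (by linarith)
  rw [this]; exact cfcₙ_const_zero ℝ a

lemma iteration (hB : HasCopies B) (hsc : StrictComparison B) {E E1 : B} (h : IsBase E E1) {a b : B}
    (ha : 0 ≤ a) (hb : 0 ≤ b) (hω : omegaOn (closure (QTSetHer E)) a = 0)
    (hlt : ∀ τ : QuasiTrace B, ¬ τ.IsZero → dTau τ a < dTau τ b) :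
    ∃ (δ : ℕ → ℝ) (z : ℕ → B), (∀ n, 0 < δ n) ∧ Tendsto δ atTop (𝓝 0) ∧ Antitone δ ∧
      fEps (δ 0) a = 0 ∧ (∀ n, z n ∈ rcl b) ∧
      (∀ n, star (z n) * z n = fEps (δ (n + 1)) a - fEps (δ n) a) ∧
      ∀ m n, m < n → star (z m) * z n = 0 := by
  obtain ⟨κ, hκ0, hκ, hgap⟩ := gap h ha hb hω hlt
  have I0 : Inv E a (2 * ‖a‖ + 2) κ b := by
    refine ⟨by positivity, hκ0, hκ, hb, fun τ hτ => le_trans ?_ (hgap τ hτ)⟩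
    gcongr
    exact d_mono τ (rE_nonneg _ ha) ha (rE_mem _ ha)
  choose fδ fκ fc fz h1 h2 h3 h4 h5 h6 using
    fun s : {s : ℝ × ℝ≥0∞ × B // Inv E a s.1 s.2.1 s.2.2} => step hB hsc h ha hω s.2
  let S : ℕ → {s : ℝ × ℝ≥0∞ × B // Inv E a s.1 s.2.1 s.2.2} := fun n =>
    Nat.rec ⟨(2 * ‖a‖ + 2, κ, b), I0⟩ (fun _ s => ⟨(fδ s, fκ s, fc s), h1 s⟩) n
  have hδle : ∀ n, (S (n + 1)).1.1 ≤ (S n).1.1 / 2 := fun n => h2 (S n)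
  have hδ0 : ∀ n, 0 < (S n).1.1 := fun n => (S n).2.δpos
  have hanti : Antitone (fun n => (S n).1.1) :=
    antitone_nat_of_succ_le (fun n => by have := hδle n; have := hδ0 n; linarith)
  have hmem : ∀ m k, (S (m + k)).1.2.2 ∈ rcl (S m).1.2.2 := by
    intro m k
    induction k with
    | zero => exact mem_rcl_self (S m).2.cpos
    | succ k ih => exact rcl_trans (h3 (S (m + k))) ih
  refine ⟨fun n => (S n).1.1, fun n => fz (S n), hδ0, ?_, hanti, fEps_big ha, fun n => ?_,
    fun n => h5 (S n), fun m n hmn => ?_⟩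
  · have hb2 : ∀ n, (S n).1.1 ≤ (S 0).1.1 * (1 / 2) ^ n := by
      intro n
      induction n with
      | zero => simp
      | succ n ih => have := hδle n; rw [pow_succ]; linarith
    refine squeeze_zero (fun n => (hδ0 n).le) hb2 ?_
    have := (tendsto_pow_atTop_nhds_zero_of_lt_one (r := (1 / 2 : ℝ)) (by norm_num)
      (by norm_num)).const_mul (S 0).1.1
    simpa using this
  · have := hmem 0 n
    rw [zero_add] at this
    exact rcl_trans (h4 (S n)) this
  · obtain ⟨k, rfl⟩ := Nat.exists_eq_add_of_lt hmn
    have e : m + k + 1 = m + 1 + k := by ring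
    rw [e]
    exact rcl_ann (rcl_trans (h4 (S (m + 1 + k))) (hmem (m + 1) k)) (h6 (S m))

end P8

section P9
set_option linter.unusedSectionVars false
set_option linter.unusedVariables false
variable {C V : Type*} [NonUnitalCStarAlgebra C] [PartialOrder C] [StarOrderedRing C]
  [NonUnitalCStarAlgebra V] [PartialOrder V] [StarOrderedRing V]

lemma Hmod_closed (SB : Stabilization C V) (a : V) : IsClosed (Hmod SB a) := isClosed_closure

lemma Hmod_rcl (SB : Stabilization C V) {a y : V} (hy : y ∈ Hmod SB a) : y ∈ rcl a := by
  have : Hmod SB a ⊆ rcl a := by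
    refine closure_minimal ?_ (rcl_closed a)
    rintro _ ⟨w, c, rfl⟩
    exact mul_mem_rcl _ _
  exact this hy

lemma Hmod_induct (SB : Stabilization C V) {a : V} {S : Set V} (hS : IsClosed S)
    (h : ∀ w c, a * (w * SB.emb 0 0 c) ∈ S) {y : V} (hy : y ∈ Hmod SB a) : y ∈ S := by
  have : Hmod SB a ⊆ S := by
    refine closure_minimal ?_ hS
    rintro _ ⟨w, c, rfl⟩
    exact h w c
  exact this hy

lemma Hmod_gen (SB : Stabilization C V) (a w : V) (c : C) :
    a * (w * SB.emb 0 0 c) ∈ Hmod SB a := subset_closure ⟨w, c, rfl⟩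

lemma Hmod_add (SB : Stabilization C V) {a x y : V} (hx : x ∈ Hmod SB a) (hy : y ∈ Hmod SB a) :
    x + y ∈ Hmod SB a := by
  refine Hmod_induct SB (S := {x | x + y ∈ Hmod SB a})
    ((Hmod_closed SB a).preimage (by fun_prop)) (fun w c => ?_) hx
  refine Hmod_induct SB (S := {y | a * (w * SB.emb 0 0 c) + y ∈ Hmod SB a})
    ((Hmod_closed SB a).preimage (by fun_prop)) (fun w' c' => ?_) hy
  have hl := CStarAlgebra.increasingApproximateUnit C
  have := hl.neBot
  have hT : Tendsto (fun f : C => a * ((w * SB.emb 0 0 c + w' * SB.emb 0 0 c') * SB.emb 0 0 f))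
      (CStarAlgebra.approximateUnit C)
      (𝓝 (a * (w * SB.emb 0 0 c) + a * (w' * SB.emb 0 0 c'))) := by
    have e : ∀ f : C, a * ((w * SB.emb 0 0 c + w' * SB.emb 0 0 c') * SB.emb 0 0 f) =
        a * (w * SB.emb 0 0 (c * f)) + a * (w' * SB.emb 0 0 (c' * f)) := fun f => by
      rw [add_mul, mul_assoc, mul_assoc, SB.emb_mul, SB.emb_mul, if_pos rfl, if_pos rfl, mul_add]
    simp only [e]
    have h1 := ((emb_cont SB 0 0).tendsto c).comp (hl.tendsto_mul_left c)
    have h2 := ((emb_cont SB 0 0).tendsto c').comp (hl.tendsto_mul_left c')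
    exact ((h1.const_mul w).const_mul a).add ((h2.const_mul w').const_mul a)
  exact (Hmod_closed SB a).mem_of_tendsto hT (Eventually.of_forall fun f => Hmod_gen SB _ _ _)

lemma Hmod_smul (SB : Stabilization C V) {a x : V} (hx : x ∈ Hmod SB a) (r : ℂ) :
    r • x ∈ Hmod SB a := by
  refine Hmod_induct SB (S := {x | r • x ∈ Hmod SB a})
    ((Hmod_closed SB a).preimage (by fun_prop)) (fun w c => ?_) hx
  have : r • (a * (w * SB.emb 0 0 c)) = a * ((r • w) * SB.emb 0 0 c) := by
    rw [smul_mul_assoc, mul_smul_comm]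
  rw [Set.mem_setOf_eq, this]
  exact Hmod_gen SB _ _ _

lemma Hmod_zero (SB : Stabilization C V) (a : V) : (0 : V) ∈ Hmod SB a := by
  simpa using Hmod_gen SB a 0 0

lemma Hmod_act (SB : Stabilization C V) {a x : V} (hx : x ∈ Hmod SB a) (d : C) :
    x * SB.emb 0 0 d ∈ Hmod SB a := by
  refine Hmod_induct SB (S := {x | x * SB.emb 0 0 d ∈ Hmod SB a})
    ((Hmod_closed SB a).preimage (by fun_prop)) (fun w c => ?_) hx
  rw [Set.mem_setOf_eq, mul_assoc]
  exact Hmod_gen SB a (w * SB.emb 0 0 c) d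

lemma Hmod_left (SB : Stabilization C V) {a b s x : V} (hs : s ∈ rcl b) (hx : x ∈ Hmod SB a) :
    s * x ∈ Hmod SB b := by
  refine rcl_induct hs (S := {s | s * x ∈ Hmod SB b})
    ((Hmod_closed SB b).preimage (by fun_prop)) (fun y => ?_)
  refine Hmod_induct SB (S := {x | b * y * x ∈ Hmod SB b})
    ((Hmod_closed SB b).preimage (by fun_prop)) (fun w c => ?_) hx
  have : b * y * (a * (w * SB.emb 0 0 c)) = b * ((y * a * w) * SB.emb 0 0 c) := by
    simp only [mul_assoc]
  rw [Set.mem_setOf_eq, this]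
  exact Hmod_gen SB _ _ _

/-- partial sums: inner products of two partial sums -/
lemma sum_inner {P z : ℕ → V} (h0 : P 0 = 0)
    (hz : ∀ n, star (z n) * z n = P (n + 1) - P n)
    (ho : ∀ m n, m < n → star (z m) * z n = 0) (M k : ℕ) :
    star (∑ n ∈ Finset.range M, z n) * (∑ n ∈ Finset.range (M + k), z n) = P M := by
  have hne : ∀ m n, m ≠ n → star (z m) * z n = 0 := fun m n h => by
    rcases lt_or_gt_of_ne h with h | h
    · exact ho m n h
    · have := congrArg star (ho n m h)
      simpa using this
  have key : ∀ m ∈ Finset.range M,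
      star (z m) * (∑ n ∈ Finset.range (M + k), z n) = P (m + 1) - P m := fun m hm => by
    rw [Finset.mul_sum, Finset.sum_eq_single m (fun n _ hn => hne m n hn.symm), hz]
    intro h
    exact absurd (Finset.mem_range.2 (by have := Finset.mem_range.1 hm; omega)) h
  rw [star_sum, Finset.sum_mul, Finset.sum_congr rfl key, Finset.sum_range_sub, h0, sub_zero]

lemma exists_u {a b : V} (ha : 0 ≤ a) {δ : ℕ → ℝ} {z : ℕ → V} (hδ : ∀ n, 0 < δ n)
    (hδ0 : Tendsto δ atTop (𝓝 0)) (h0 : fEps (δ 0) a = 0) (hzb : ∀ n, z n ∈ rcl b)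
    (hz : ∀ n, star (z n) * z n = fEps (δ (n + 1)) a - fEps (δ n) a)
    (ho : ∀ m n, m < n → star (z m) * z n = 0) :
    ∃ (S : ℕ → V) (u : V → V), (∀ n, S n ∈ rcl b) ∧
      (∀ y ∈ rcl a, Tendsto (fun n => S n * y) atTop (𝓝 (u y))) ∧
      ∀ x ∈ rcl a, ∀ y ∈ rcl a, star (u x) * u y = star x * y := by
  set S : ℕ → V := fun N => ∑ n ∈ Finset.range N, z n with hS
  set P : ℕ → V := fun n => fEps (δ n) a with hP
  have hPs : ∀ n, star (P n) = P n := fun n => fEps_star _ _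
  have hin : ∀ M N, M ≤ N → star (S M) * S N = P M := fun M N h => by
    obtain ⟨k, rfl⟩ := Nat.exists_eq_add_of_le h
    exact sum_inner (P := P) h0 hz ho M k
  have hin' : ∀ M N, M ≤ N → star (S N) * S M = P M := fun M N h => by
    have := congrArg star (hin M N h)
    rwa [star_mul, star_star, hPs] at this
  have hd : ∀ M N, M ≤ N → star (S N - S M) * (S N - S M) = P N - P M := fun M N h => by
    rw [star_sub, sub_mul, mul_sub, mul_sub, hin N N le_rfl, hin M M le_rfl, hin M N h, hin' M N h]
    abel
  have hPy : ∀ y ∈ rcl a, Tendsto (fun n => P n * y) atTop (𝓝 y) := fun y hy =>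
    approx_unit_seq hδ hδ0 ha hy
  have hcau : ∀ y ∈ rcl a, CauchySeq (fun n => S n * y) := fun y hy => by
    rw [Metric.cauchySeq_iff']
    intro ε hε
    have hc := (hPy y hy).cauchySeq
    rw [Metric.cauchySeq_iff'] at hc
    obtain ⟨M, hM⟩ := hc (ε ^ 2 / (‖y‖ + 1)) (by positivity)
    refine ⟨M, fun N hN => ?_⟩
    have h1 := hM N hN
    rw [dist_eq_norm, ← sub_mul] at h1 ⊢
    have h2 : ‖(S N - S M) * y‖ * ‖(S N - S M) * y‖ ≤ ‖y‖ * ‖(P N - P M) * y‖ := by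
      rw [← CStarRing.norm_star_mul_self, star_mul]
      have : star y * star (S N - S M) * ((S N - S M) * y) = star y * ((P N - P M) * y) := by
        rw [← hd M N hN]; simp only [mul_assoc]
      rw [this]
      exact (norm_mul_le _ _).trans (by rw [norm_star])
    have h3 : ‖y‖ * ‖(P N - P M) * y‖ < ε ^ 2 := by
      rw [lt_div_iff₀ (by positivity)] at h1
      nlinarith [norm_nonneg ((P N - P M) * y)]
    exact lt_of_pow_lt_pow_left₀ 2 hε.le (by nlinarith)
  have hex : ∀ y : V, ∃ v : V, y ∈ rcl a → Tendsto (fun n => S n * y) atTop (𝓝 v) := fun y => by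
    by_cases hy : y ∈ rcl a
    · obtain ⟨v, hv⟩ := cauchySeq_tendsto_of_complete (hcau y hy)
      exact ⟨v, fun _ => hv⟩
    · exact ⟨0, fun h => absurd h hy⟩
  choose u hu using hex
  refine ⟨S, u, fun n => ?_, hu, fun x hx y hy => ?_⟩
  · induction n with
    | zero => simpa [hS] using rcl_zero b
    | succ n ih =>
      have : S (n + 1) = S n + z n := Finset.sum_range_succ _ _
      rw [this]; exact rcl_add ih (hzb n)
  · have h1 := ((hu x hx).star).mul (hu y hy)
    have h2 : Tendsto (fun n => star x * (P n * y)) atTop (𝓝 (star x * y)) :=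
      (hPy y hy).const_mul _
    refine tendsto_nhds_unique h1 (h2.congr fun n => ?_)
    rw [← hin n n le_rfl, star_mul]; simp only [mul_assoc]

lemma final (SB : Stabilization C V) {a b : V} {S : ℕ → V} {u : V → V} (hS : ∀ n, S n ∈ rcl b)
    (hu : ∀ y ∈ rcl a, Tendsto (fun n => S n * y) atTop (𝓝 (u y)))
    (hi : ∀ x ∈ rcl a, ∀ y ∈ rcl a, star (u x) * u y = star x * y) :
    ∃ N : Set V, N ⊆ Hmod SB b ∧ IsClosedSubmodule SB N ∧
      ∃ u : V → V, Set.MapsTo u (Hmod SB a) N ∧ Set.SurjOn u (Hmod SB a) N ∧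
        (∀ x ∈ Hmod SB a, ∀ y ∈ Hmod SB a, u (x + y) = u x + u y) ∧
        (∀ (c : ℂ), ∀ x ∈ Hmod SB a, u (c • x) = c • u x) ∧
        (∀ (c : C), ∀ x ∈ Hmod SB a, u (x * SB.emb 0 0 c) = u x * SB.emb 0 0 c) ∧
        (∀ x ∈ Hmod SB a, ∀ y ∈ Hmod SB a, star (u x) * u y = star x * y) := by
  have hr : ∀ {x}, x ∈ Hmod SB a → x ∈ rcl a := fun h => Hmod_rcl SB h
  have hadd : ∀ x ∈ rcl a, ∀ y ∈ rcl a, u (x + y) = u x + u y := fun x hx y hy =>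
    tendsto_nhds_unique (hu _ (rcl_add hx hy))
      (((hu x hx).add (hu y hy)).congr fun n => by rw [mul_add])
  have hsub : ∀ x ∈ rcl a, ∀ y ∈ rcl a, u (x - y) = u x - u y := fun x hx y hy =>
    tendsto_nhds_unique (hu _ (rcl_sub hx hy))
      (((hu x hx).sub (hu y hy)).congr fun n => by rw [mul_sub])
  have hsm : ∀ (c : ℂ), ∀ x ∈ Hmod SB a, u (c • x) = c • u x := fun c x hx =>
    tendsto_nhds_unique (hu _ (hr (Hmod_smul SB hx c)))
      (((hu x (hr hx)).const_smul c).congr fun n => by rw [mul_smul_comm])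
  have hact : ∀ (c : C), ∀ x ∈ Hmod SB a, u (x * SB.emb 0 0 c) = u x * SB.emb 0 0 c :=
    fun c x hx => tendsto_nhds_unique (hu _ (hr (Hmod_act SB hx c)))
      (((hu x (hr hx)).mul_const _).congr fun n => by rw [mul_assoc])
  have hnorm : ∀ x ∈ rcl a, ‖u x‖ = ‖x‖ := fun x hx => by
    have h := congrArg norm (hi x hx x hx)
    rw [CStarRing.norm_star_mul_self, CStarRing.norm_star_mul_self] at h
    exact (mul_self_inj (norm_nonneg _) (norm_nonneg _)).1 h
  have hdist : ∀ x ∈ rcl a, ∀ y ∈ rcl a, dist (u x) (u y) = dist x y := fun x hx y hy => by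
    rw [dist_eq_norm, dist_eq_norm, ← hsub x hx y hy, hnorm _ (rcl_sub hx hy)]
  have hu0 : u 0 = 0 := norm_eq_zero.1 (by rw [hnorm 0 (rcl_zero a), norm_zero])
  refine ⟨u '' Hmod SB a, ?_, ⟨?_, ?_, ?_, ?_, ?_⟩, u, Set.mapsTo_image _ _, Set.surjOn_image _ _,
    fun x hx y hy => hadd x (hr hx) y (hr hy), hsm, hact,
    fun x hx y hy => hi x (hr hx) y (hr hy)⟩
  · rintro _ ⟨x, hx, rfl⟩
    exact (Hmod_closed SB b).mem_of_tendsto (hu x (hr hx))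
      (Eventually.of_forall fun n => Hmod_left SB (hS n) hx)
  · refine isClosed_of_closure_subset fun y hy => ?_
    obtain ⟨v, hv, hvy⟩ := mem_closure_iff_seq_limit.1 hy
    choose x hx hxv using hv
    have hc : CauchySeq x := by
      have h1 := hvy.cauchySeq
      rw [Metric.cauchySeq_iff] at h1 ⊢
      intro ε hε
      obtain ⟨N, hN⟩ := h1 ε hε
      refine ⟨N, fun m hm n hn => ?_⟩
      rw [← hdist _ (hr (hx m)) _ (hr (hx n)), hxv, hxv]
      exact hN m hm n hn
    obtain ⟨x0, hx0⟩ := cauchySeq_tendsto_of_complete hc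
    have hx0a : x0 ∈ Hmod SB a := (Hmod_closed SB a).mem_of_tendsto hx0 (Eventually.of_forall hx)
    refine ⟨x0, hx0a, ?_⟩
    refine tendsto_nhds_unique ?_ hvy
    rw [tendsto_iff_dist_tendsto_zero] at hx0 ⊢
    refine hx0.congr fun n => ?_
    rw [← hdist _ (hr (hx n)) _ (hr hx0a), hxv]
  · exact ⟨0, Hmod_zero SB a, hu0⟩
  · rintro _ ⟨x, hx, rfl⟩ _ ⟨y, hy, rfl⟩
    exact ⟨x + y, Hmod_add SB hx hy, hadd x (hr hx) y (hr hy)⟩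
  · rintro c _ ⟨x, hx, rfl⟩
    exact ⟨c • x, Hmod_smul SB hx c, hsm c x hx⟩
  · rintro _ ⟨x, hx, rfl⟩ c
    exact ⟨x * SB.emb 0 0 c, Hmod_act SB hx c, hact c x hx⟩

end P9

/-- **Corollary.** Let `A` be a σ-unital simple C*-algebra with strict comparison which is not
purely infinite, and let `H_a`, `H_b` be the (countably generated) Hilbert `A`-modules
associated to `a, b ∈ (A ⊗ K)₊`.  If `ω(H_a) = 0` and `d_τ(H_a) < d_τ(H_b)` for all nonzero
`τ ∈ QT̃(A)`, then `H_a` is unitarily equivalent to a Hilbert `A`-submodule of `H_b`: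
there is a closed submodule `N ⊆ H_b` and a surjective `A`-module map `u : H_a → N`
preserving the `A`-valued inner products. -/
theorem Hmod_unitarily_embeds
    (SB : Stabilization A W)
    (hσ : SigmaUnital A) (hsimple : IsSimpleCStar A)
    (hsc : StrictComparison W) (hnpi : ¬ PurelyInfinite A)
    (a b : W) (ha : 0 ≤ a) (hb : 0 ≤ b)
    (hω : OmegaZero SB a)
    (hlt : ∀ τ : QuasiTrace W, ¬ τ.IsZero → dTau τ a < dTau τ b) :
    ∃ N : Set W, N ⊆ Hmod SB b ∧ IsClosedSubmodule SB N ∧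
      ∃ u : W → W, Set.MapsTo u (Hmod SB a) N ∧ Set.SurjOn u (Hmod SB a) N ∧
        (∀ x ∈ Hmod SB a, ∀ y ∈ Hmod SB a, u (x + y) = u x + u y) ∧
        (∀ (c : ℂ), ∀ x ∈ Hmod SB a, u (c • x) = c • u x) ∧
        (∀ (c : A), ∀ x ∈ Hmod SB a, u (x * SB.emb 0 0 c) = u x * SB.emb 0 0 c) ∧
        (∀ x ∈ Hmod SB a, ∀ y ∈ Hmod SB a, star (u x) * u y = star x * y) := by
  obtain ⟨e, he, he0, hep, E1, hE⟩ := exists_base SB hsimple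
  obtain ⟨δ, z, h1, h2, _, h4, h5, h6, h7⟩ :=
    iteration (hasCopies SB) hsc hE ha hb (hω e he he0 hep) hlt
  obtain ⟨S, u, k1, k2, k3⟩ := exists_u ha h1 h2 h4 h5 h6 h7
  exact final SB k1 k2 k3
end Paper
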